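/- Let F be a field other than the two-element field (i.e. F contains an element x with x ≠ 0 and x ≠ 1). For every n ≥ 1, the stabilization map GL_n(F) → GL_{n+1}(F), A ↦ diag(A,1), induces an isomorphism H_d(GL_n(F); ℤ) → H_d(GL_{n+1}(F); ℤ) for all d ≤ n − 1, and a surjection for d = n. -/

import Mathlib

/-! # Group homology via the inhomogeneous bar complex (trivial coefficients) -/

namespace GroupHomologyBar

variable (G : Type) [Group G] (A : Type) [AddCommGroup A]

/-- Inhomogeneous `n`-chains of `G` with coefficients in `A`. -/
abbrev chains (n : ℕ) : Type := (Fin n → G) →₀ A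

/-- The differential of the inhomogeneous bar complex with trivial `G`-action on the
coefficients, sending `[g₁|…|g_{n+1}] ⊗ a` to
`[g₂|…|g_{n+1}] ⊗ a + ∑ⱼ (-1)^{j+1} [g₁|…|gⱼg_{j+1}|…|g_{n+1}] ⊗ a`
(the last summand of the sum being `(-1)^{n+1} [g₁|…|g_n] ⊗ a`). -/
noncomputable def d (n : ℕ) : chains G A (n + 1) →ₗ[ℤ] chains G A n :=
  Finsupp.lsum ℤ fun g =>
    (Finsupp.lsingle (Fin.tail g) : A →ₗ[ℤ] chains G A n)
      + ∑ j : Fin (n + 1),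
          ((-1 : ℤ) ^ ((j : ℕ) + 1)) • Finsupp.lsingle (Fin.contractNth j (· * ·) g)

/-- The `n`-cycles. -/
noncomputable def cycles : (n : ℕ) → Submodule ℤ (chains G A n)
  | 0 => ⊤
  | (n + 1) => LinearMap.ker (d G A n)

/-- The `n`-boundaries, viewed as a submodule of the `n`-cycles. -/
noncomputable def boundaries (n : ℕ) : Submodule ℤ (cycles G A n) :=
  Submodule.comap (cycles G A n).subtype (LinearMap.range (d G A n))

/-- The group homology `H_n(G; A)` of `G` with trivial coefficients in `A`. -/
abbrev Homology (n : ℕ) : Type := cycles G A n ⧸ boundaries G A n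

variable {G}
variable {G' : Type} [Group G']

/-- The map on chains induced by a group homomorphism. -/
noncomputable def chainsMap (φ : G →* G') (n : ℕ) : chains G A n →ₗ[ℤ] chains G' A n :=
  Finsupp.lmapDomain A ℤ fun v => φ ∘ v

lemma chainsMap_single (φ : G →* G') {n : ℕ} (v : Fin n → G) (a : A) :
    chainsMap A φ n (Finsupp.single v a) = Finsupp.single (φ ∘ v) a := by
  simp [chainsMap, Finsupp.mapDomain_single]

lemma d_single {n : ℕ} (g : Fin (n + 1) → G) (a : A) :
    d G A n (Finsupp.single g a)
      = Finsupp.single (Fin.tail g) a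
        + ∑ j : Fin (n + 1),
            ((-1 : ℤ) ^ ((j : ℕ) + 1)) • Finsupp.single (Fin.contractNth j (· * ·) g) a := by
  simp [d, Finsupp.lsum_single]

lemma d_chainsMap (φ : G →* G') (n : ℕ) :
    (d G' A n).comp (chainsMap A φ (n + 1)) = (chainsMap A φ n).comp (d G A n) := by
  apply Finsupp.lhom_ext
  intro g a
  have hc : ∀ j : Fin (n + 1),
      φ ∘ Fin.contractNth j (· * ·) g = Fin.contractNth j (· * ·) (φ ∘ g) := by
    intro j
    funext k
    simp only [Function.comp_apply, Fin.contractNth]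
    split_ifs <;> simp
  simp only [LinearMap.comp_apply, chainsMap_single, d_single, map_add, map_sum, map_smul,
    chainsMap_single, Fin.comp_tail, hc]

lemma chainsMap_mem_cycles (φ : G →* G') (n : ℕ) :
    ∀ x ∈ cycles G A n, chainsMap A φ n x ∈ cycles G' A n := by
  intro x hx
  cases n with
  | zero => trivial
  | succ n =>
    simp only [cycles, LinearMap.mem_ker] at hx ⊢
    have := congrArg (fun L : chains G A (n + 1) →ₗ[ℤ] chains G' A n => L x) (d_chainsMap A φ n)
    simp only [LinearMap.comp_apply] at this
    rw [this, hx, map_zero]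

/-- The map on cycles induced by a group homomorphism. -/
noncomputable def cyclesMap (φ : G →* G') (n : ℕ) : cycles G A n →ₗ[ℤ] cycles G' A n :=
  (chainsMap A φ n).restrict (chainsMap_mem_cycles A φ n)

/-- The map `H_n(G; A) → H_n(G'; A)` on group homology induced by a group
homomorphism `φ : G →* G'`. -/
noncomputable def inducedMap (φ : G →* G') (n : ℕ) :
    Homology G A n →ₗ[ℤ] Homology G' A n :=
  Submodule.mapQ _ _ (cyclesMap A φ n) (by
    rintro ⟨x, hx⟩ hmem
    simp only [boundaries, Submodule.mem_comap, Submodule.subtype_apply,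
      LinearMap.mem_range] at hmem ⊢
    obtain ⟨y, hy⟩ := hmem
    refine ⟨chainsMap A φ (n + 1) y, ?_⟩
    have := congrArg (fun L : chains G A (n + 1) →ₗ[ℤ] chains G' A n => L y) (d_chainsMap A φ n)
    simp only [LinearMap.comp_apply] at this
    rw [this, hy]
    rfl)

end GroupHomologyBar

/-- The block-sum monoid homomorphism `A ↦ diag(A, 1)` on square matrices. -/
noncomputable def diagBlockHom (F : Type) [Field F] (n : ℕ) :
    Matrix (Fin n) (Fin n) F →* Matrix (Fin (n + 1)) (Fin (n + 1)) F :=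
  ((Matrix.reindexAlgEquiv F F (finSumFinEquiv : Fin n ⊕ Fin 1 ≃ Fin (n + 1))).toRingEquiv.toMonoidHom).comp
    { toFun := fun A => Matrix.fromBlocks A 0 0 (1 : Matrix (Fin 1) (Fin 1) F)
      map_one' := Matrix.fromBlocks_one
      map_mul' := fun A B => by
        rw [Matrix.fromBlocks_multiply]
        simp }

/-- The stabilization homomorphism `GL_n(F) → GL_{n+1}(F)`, `A ↦ diag(A, 1)`. -/
noncomputable def glStab (F : Type) [Field F] (n : ℕ) :
    GL (Fin n) F →* GL (Fin (n + 1)) F :=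
  Units.map (diagBlockHom F n)


namespace GLStab

/-- A nonnegatively graded chain complex of abelian groups. -/
structure Cx where
  X : ℕ → Type
  [grp : ∀ n, AddCommGroup (X n)]
  d : ∀ n, X (n + 1) →+ X n
  dd : ∀ n x, d n (d (n + 1) x) = 0

attribute [instance] Cx.grp

/-- Chain maps. -/
structure CMap (A B : Cx) where
  f : ∀ n, A.X n →+ B.X n
  comm : ∀ n x, f n (A.d n x) = B.d n (f (n + 1) x)

namespace CMap
/-- Composition. -/
def comp {A B C : Cx} (g : CMap B C) (f : CMap A B) : CMap A C where
  f n := (g.f n).comp (f.f n)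
  comm n x := by simp [f.comm, g.comm]
end CMap

/-- Cycles. -/
def Cx.cyc (A : Cx) : ∀ n, A.X n → Prop
  | 0, _ => True
  | n + 1, x => A.d n x = 0

lemma Cx.cyc_d (A : Cx) (n : ℕ) (x : A.X (n + 1)) : A.cyc n (A.d n x) := by
  cases n with
  | zero => trivial
  | succ n => exact A.dd n x

lemma Cx.cyc_add (A : Cx) {n : ℕ} {x y : A.X n} (hx : A.cyc n x) (hy : A.cyc n y) :
    A.cyc n (x + y) := by
  cases n with
  | zero => trivial
  | succ n =>
    simp only [Cx.cyc] at *
    rw [map_add, hx, hy, add_zero]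

lemma Cx.cyc_neg (A : Cx) {n : ℕ} {x : A.X n} (hx : A.cyc n x) :
    A.cyc n (-x) := by
  cases n with
  | zero => trivial
  | succ n =>
    simp only [Cx.cyc] at *
    rw [map_neg, hx, neg_zero]

lemma Cx.cyc_zero (A : Cx) {n : ℕ} : A.cyc n 0 := by
  cases n with
  | zero => trivial
  | succ n => simp [Cx.cyc]

lemma CMap.cyc {A B : Cx} (f : CMap A B) {n : ℕ} {x : A.X n} (hx : A.cyc n x) :
    B.cyc n (f.f n x) := by
  cases n with
  | zero => trivial
  | succ n =>
    simp only [Cx.cyc] at *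
    rw [← f.comm, hx, map_zero]

lemma CMap.cyc_inj {A B : Cx} (f : CMap A B) (hf : ∀ n, Function.Injective (f.f n))
    {n : ℕ} {x : A.X n} (hx : B.cyc n (f.f n x)) : A.cyc n x := by
  cases n with
  | zero => trivial
  | succ n =>
    simp only [Cx.cyc] at *
    apply hf n
    rw [f.comm, hx, map_zero]

/-- Surjectivity on homology. -/
def Surj {A B : Cx} (f : CMap A B) (n : ℕ) : Prop :=
  ∀ b, B.cyc n b → ∃ a, A.cyc n a ∧ ∃ c, b = f.f n a + B.d n c

/-- Injectivity on homology. -/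
def Inj {A B : Cx} (f : CMap A B) (n : ℕ) : Prop :=
  ∀ a, A.cyc n a → (∃ b, B.d n b = f.f n a) → ∃ a', a = A.d n a'

/-- Vanishing of relative homology. -/
def Rel {A B : Cx} (f : CMap A B) : ℕ → Prop
  | 0 => ∀ b, ∃ a c, b = f.f 0 a + B.d 0 c
  | n + 1 => ∀ (b : B.X (n + 1)) (a : A.X n), A.cyc n a → B.d n b = f.f n a →
      ∃ a' c, A.d n a' = a ∧ b = f.f (n + 1) a' + B.d (n + 1) c

/-- The map is iso below degree `m` and epi in degree `m`. -/
def Good {A B : Cx} (f : CMap A B) (m : ℕ) : Prop :=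
  (∀ n ≤ m, Surj f n) ∧ ∀ n < m, Inj f n

lemma rel_zero {A B : Cx} (f : CMap A B) : Rel f 0 ↔ Surj f 0 := by
  constructor
  · intro h b _
    obtain ⟨a, c, h⟩ := h b
    exact ⟨a, trivial, c, h⟩
  · intro h b
    obtain ⟨a, _, c, h⟩ := h b trivial
    exact ⟨a, c, h⟩

lemma rel_succ {A B : Cx} (f : CMap A B) (n : ℕ) :
    Rel f (n + 1) ↔ Surj f (n + 1) ∧ Inj f n := by
  constructor
  · intro h
    refine ⟨fun b hb => ?_, fun a ha hb => ?_⟩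
    · obtain ⟨a', c, h1, h2⟩ := h b 0 A.cyc_zero (by rw [map_zero]; exact hb)
      exact ⟨a', h1, c, h2⟩
    · obtain ⟨b, hb⟩ := hb
      obtain ⟨a', c, h1, h2⟩ := h b a ha hb
      exact ⟨a', h1.symm⟩
  · rintro ⟨h1, h2⟩ b a ha hb
    obtain ⟨a', rfl⟩ := h2 a ha ⟨b, hb⟩
    obtain ⟨x, hx, c, hc⟩ := h1 (b - f.f _ a') (by
      simp only [Cx.cyc]
      rw [map_sub, hb, f.comm, sub_self])
    refine ⟨a' + x, c, ?_, ?_⟩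
    · simp only [Cx.cyc] at hx
      rw [map_add, hx, add_zero]
    · rw [map_add, add_assoc, ← hc]; abel

lemma good_iff {A B : Cx} (f : CMap A B) (m : ℕ) : Good f m ↔ ∀ n ≤ m, Rel f n := by
  constructor
  · rintro ⟨h1, h2⟩ n hn
    cases n with
    | zero => exact (rel_zero f).2 (h1 0 hn)
    | succ n => exact (rel_succ f n).2 ⟨h1 _ hn, h2 _ hn⟩
  · intro h
    refine ⟨fun n hn => ?_, fun n hn => ((rel_succ f n).1 (h (n+1) hn)).2⟩
    cases n with
    | zero => exact (rel_zero f).1 (h 0 hn)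
    | succ n => exact ((rel_succ f n).1 (h (n+1) hn)).1

lemma Good.mono {A B : Cx} {f : CMap A B} {m k : ℕ} (h : Good f m) (hk : k ≤ m) : Good f k :=
  ⟨fun n hn => h.1 n (hn.trans hk), fun n hn => h.2 n (hn.trans_le hk)⟩

lemma Good.comp {A B C : Cx} {f : CMap A B} {g : CMap B C} {m : ℕ} (hg : Good g m)
    (hf : Good f m) : Good (g.comp f) m := by
  refine ⟨fun n hn c hc => ?_, fun n hn a ha hb => ?_⟩
  · obtain ⟨b, hb, x, rfl⟩ := hg.1 n hn c hc
    obtain ⟨a, ha, y, rfl⟩ := hf.1 n hn b hb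
    refine ⟨a, ha, g.f _ y + x, ?_⟩
    simp only [CMap.comp, map_add, g.comm, AddMonoidHom.comp_apply]
    abel
  · obtain ⟨b, hb⟩ := hb
    obtain ⟨y, hy⟩ := hg.2 n hn (f.f n a) (f.cyc ha) ⟨b, hb⟩
    exact hf.2 n hn a ha ⟨y, hy.symm⟩

/-- Equal on homology. -/
def Homo {A B : Cx} (f g : CMap A B) : Prop :=
  ∀ n a, A.cyc n a → ∃ c, f.f n a = g.f n a + B.d n c

lemma Homo.refl {A B : Cx} (f : CMap A B) : Homo f f := fun n a _ => ⟨0, by simp⟩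

lemma Homo.good {A B : Cx} {f g : CMap A B} (h : Homo f g) {m : ℕ} (hg : Good g m) :
    Good f m := by
  refine ⟨fun n hn c hc => ?_, fun n hn a ha hb => ?_⟩
  · obtain ⟨a, ha, x, rfl⟩ := hg.1 n hn c hc
    obtain ⟨y, hy⟩ := h n a ha
    refine ⟨a, ha, x - y, ?_⟩
    rw [hy, map_sub]; abel
  · obtain ⟨b, hb⟩ := hb
    obtain ⟨y, hy⟩ := h n a ha
    exact hg.2 n hn a ha ⟨b - y, by rw [map_sub, hb, hy]; abel⟩

/-- If `g ∘ f` and `f` are good then so is `g`. -/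
lemma Good.of_comp {A B C : Cx} {f : CMap A B} {g : CMap B C} {m : ℕ}
    (hgf : Good (g.comp f) m) (hf : Good f m) : Good g m := by
  refine ⟨fun n hn c hc => ?_, fun n hn b hb hc => ?_⟩
  · obtain ⟨a, ha, x, rfl⟩ := hgf.1 n hn c hc
    exact ⟨f.f n a, f.cyc ha, x, rfl⟩
  · obtain ⟨c, hc⟩ := hc
    obtain ⟨a, ha, x, rfl⟩ := hf.1 n hn.le b hb
    obtain ⟨a', rfl⟩ := hgf.2 n hn a ha ⟨c - g.f _ x, by
      rw [map_sub, hc, map_add, g.comm]; simp [CMap.comp]⟩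
    exact ⟨f.f _ a' + x, by rw [map_add, f.comm]⟩

/-- If `f` is degreewise bijective it is good. -/
lemma good_of_bij {A B : Cx} (f : CMap A B) (hf : ∀ n, Function.Bijective (f.f n)) (m : ℕ) :
    Good f m := by
  refine ⟨fun n hn c hc => ?_, fun n hn a ha hb => ?_⟩
  · obtain ⟨a, rfl⟩ := (hf n).2 c
    exact ⟨a, f.cyc_inj (fun n => (hf n).1) hc, 0, by simp⟩
  · obtain ⟨b, hb⟩ := hb
    obtain ⟨a', rfl⟩ := (hf (n+1)).2 b
    refine ⟨a', (hf n).1 ?_⟩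
    rw [f.comm, hb]

/-- Degreewise short exact sequences. -/
structure SES {A B C : Cx} (i : CMap A B) (p : CMap B C) : Prop where
  inj : ∀ n, Function.Injective (i.f n)
  surj : ∀ n, Function.Surjective (p.f n)
  zero : ∀ n x, p.f n (i.f n x) = 0
  exact : ∀ n x, p.f n x = 0 → ∃ y, i.f n y = x

lemma good_step {A₁ A₂ A₃ B₁ B₂ B₃ : Cx} {i : CMap A₁ A₂} {p : CMap A₂ A₃} {j : CMap B₁ B₂}
    {q : CMap B₂ B₃} (hA : SES i p) (hB : SES j q) {f₁ : CMap A₁ B₁} {f₂ : CMap A₂ B₂}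
    {f₃ : CMap A₃ B₃} (h₁ : ∀ n x, f₂.f n (i.f n x) = j.f n (f₁.f n x))
    (h₂ : ∀ n x, f₃.f n (p.f n x) = q.f n (f₂.f n x)) {m : ℕ} (g₂ : Good f₂ m)
    (g₁ : ∀ k, k + 1 = m → Good f₁ k) : Good f₃ m := by
  rw [good_iff] at *
  intro n hn
  have g₁' : ∀ k, k + 1 ≤ m → Rel f₁ k := by
    intro k hk
    obtain ⟨m, rfl⟩ : ∃ m', m = m' + 1 := ⟨m - 1, by omega⟩
    exact (good_iff _ _).1 (g₁ m rfl) k (by omega)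
  rcases n with _ | _ | n
  · intro b3
    obtain ⟨b2, rfl⟩ := hB.surj _ b3
    obtain ⟨a, c, rfl⟩ := g₂ 0 (by omega) b2
    exact ⟨p.f _ a, q.f _ c, by rw [map_add, h₂, q.comm]⟩
  · intro b3 a3 _ hab
    obtain ⟨b2, rfl⟩ := hB.surj _ b3
    obtain ⟨a2, rfl⟩ := hA.surj _ a3
    obtain ⟨b1, hb1⟩ := hB.exact 0 (B₂.d 0 b2 - f₂.f 0 a2) (by
      rw [map_sub, q.comm, hab, h₂, sub_self])
    obtain ⟨a1, c1, rfl⟩ := g₁' 0 (by omega) b1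
    obtain ⟨a', c, h3, h4⟩ := g₂ 1 (by omega) (b2 - j.f _ c1) (a2 + i.f _ a1) trivial (by
      rw [map_add, j.comm, ← h₁] at hb1
      rw [map_sub, map_add, ← eq_sub_iff_add_eq.1 hb1]
      abel)
    refine ⟨p.f _ a', q.f _ c, ?_, ?_⟩
    · rw [← p.comm, h3, map_add, hA.zero, add_zero]
    · rw [h₂, ← q.comm, ← map_add, ← h4, map_sub, hB.zero, sub_zero]
  · intro b3 a3 ha3 hab
    obtain ⟨b2, rfl⟩ := hB.surj _ b3
    obtain ⟨a2, rfl⟩ := hA.surj _ a3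
    obtain ⟨a1, ha1⟩ := hA.exact n (A₂.d n a2) (by rw [p.comm]; exact ha3)
    obtain ⟨b1, hb1⟩ := hB.exact (n+1) (B₂.d _ b2 - f₂.f _ a2) (by
      rw [map_sub, q.comm, hab, h₂, sub_self])
    have c1 : A₁.cyc n a1 := i.cyc_inj hA.inj (by rw [ha1]; exact A₂.cyc_d _ _)
    obtain ⟨a1', c1, h5, h6⟩ := g₁' (n+1) (by omega) (-b1) a1 c1 (by
      apply hB.inj
      rw [j.comm, map_neg, hb1, ← h₁, ha1, map_neg, map_sub, B₂.dd, f₂.comm]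
      abel)
    obtain ⟨a', c, h3, h4⟩ := g₂ (n+2) (by omega) (b2 + j.f _ c1) (a2 - i.f _ a1') (by
      simp only [Cx.cyc]
      rw [map_sub, ← i.comm, h5, ha1, sub_self]) (by
      have h7 := congrArg (j.f _) h6
      rw [map_neg, hb1, map_add, ← h₁, j.comm] at h7
      rw [map_add, map_sub, ← sub_eq_iff_eq_add'.2 h7]
      abel)
    refine ⟨p.f _ a', q.f _ c, ?_, ?_⟩
    · rw [← p.comm, h3, map_sub, hA.zero, sub_zero]
    · rw [h₂, ← q.comm, ← map_add, ← h4, map_add, hB.zero, add_zero]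

end GLStab

namespace GLStab

/-- The additive map given by a group element. -/
def op {G M : Type} [Group G] [AddCommGroup M] (ρ : G →* AddMonoid.End M) (g : G) : M →+ M := ρ g

lemma op_apply {G M : Type} [Group G] [AddCommGroup M] (ρ : G →* AddMonoid.End M) (g : G) (m : M) :
    op ρ g m = ρ g m := rfl

/-- The bar differential. -/
noncomputable def bd {G M : Type} [Group G] [AddCommGroup M] (ρ : G →* AddMonoid.End M) (n : ℕ) :
    ((Fin (n + 1) → G) →₀ M) →+ ((Fin n → G) →₀ M) :=
  Finsupp.liftAddHom fun g =>
    (Finsupp.singleAddHom (fun i : Fin n => g i.succ)).comp (op ρ (g 0)⁻¹) +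
    ∑ j : Fin (n + 1), ((-1 : ℤ) ^ ((j : ℕ) + 1)) •
      (Finsupp.singleAddHom (Fin.contractNth j (· * ·) g) : M →+ ((Fin n → G) →₀ M))

lemma bd_single {G M : Type} [Group G] [AddCommGroup M] (ρ : G →* AddMonoid.End M) (n : ℕ)
    (g : Fin (n + 1) → G) (m : M) :
    bd ρ n (Finsupp.single g m) = Finsupp.single (fun i : Fin n => g i.succ) (ρ (g 0)⁻¹ m) +
    ∑ j : Fin (n + 1), (-1 : ℤ) ^ ((j : ℕ) + 1) •
      Finsupp.single (Fin.contractNth j (· * ·) g) m := by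
  simp [bd, AddMonoidHom.finsetSum_apply, op_apply]

lemma bd_bd {G M : Type} [Group G] [AddCommGroup M] (ρ : G →* AddMonoid.End M) (n : ℕ)
    (x : (Fin (n + 2) → G) →₀ M) : bd ρ n (bd ρ (n + 1) x) = 0 := by
  let R : Representation ℤ G M :=
    { toFun := fun g => (ρ g : M →+ M).toIntLinearMap
      map_one' := by rw [map_one]; rfl
      map_mul' := fun a b => by rw [map_mul]; rfl }
  have key : ∀ n (x : (Fin (n + 1) → G) →₀ M),
      (groupHomology.inhomogeneousChains.d (Rep.of R) n).hom x = bd ρ n x := by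
    intro n x
    induction x using Finsupp.induction_linear with
    | zero => simp
    | add x y hx hy => rw [map_add, map_add, hx, hy]
    | single g m =>
      rw [bd_single]
      exact groupHomology.inhomogeneousChains.d_single (A := Rep.of R) n g m
  have := congrArg (fun f => f.hom x) (groupHomology.inhomogeneousChains.d_comp_d (Rep.of R) (n := n))
  rw [← key, ← key]
  exact this

/-- The bar complex. -/
noncomputable abbrev bar {G M : Type} [Group G] [AddCommGroup M] (ρ : G →* AddMonoid.End M) : Cx where
  X n := (Fin n → G) →₀ M
  d n := bd ρ n
  dd n x := bd_bd ρ n x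

/-- Functoriality of bar chains. -/
noncomputable def chm {G M H N : Type} [Group G] [AddCommGroup M] [Group H] [AddCommGroup N]
    (f : G →* H) (φ : M →+ N) (n : ℕ) : ((Fin n → G) →₀ M) →+ ((Fin n → H) →₀ N) :=
  (Finsupp.mapDomain.addMonoidHom (fun g : Fin n → G => f ∘ g)).comp
    (Finsupp.mapRange.addMonoidHom φ)

lemma chm_single {G M H N : Type} [Group G] [AddCommGroup M] [Group H] [AddCommGroup N]
    (f : G →* H) (φ : M →+ N) (n : ℕ) (g : Fin n → G) (m : M) :
    chm f φ n (Finsupp.single g m) = Finsupp.single (f ∘ g) (φ m) := by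
  simp [chm]

lemma chm_id {G M N : Type} [Group G] [AddCommGroup M] [AddCommGroup N]
    (φ : M →+ N) (n : ℕ) (x : (Fin n → G) →₀ M) :
    chm (MonoidHom.id G) φ n x = Finsupp.mapRange φ (map_zero φ) x := by
  change Finsupp.mapDomain _ _ = _
  rw [show (fun g : Fin n → G => (MonoidHom.id G) ∘ g) = id from rfl, Finsupp.mapDomain_id]
  rfl

lemma chm_comm {G M H N : Type} [Group G] [AddCommGroup M] [Group H] [AddCommGroup N]
    {ρ : G →* AddMonoid.End M} {σ : H →* AddMonoid.End N} (f : G →* H) (φ : M →+ N)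
    (h : ∀ g m, φ (ρ g m) = σ (f g) (φ m)) (n : ℕ) (x : (Fin (n + 1) → G) →₀ M) :
    chm f φ n (bd ρ n x) = bd σ n (chm f φ (n + 1) x) := by
  induction x using Finsupp.induction_linear with
  | zero => simp
  | add x y hx hy => rw [map_add, map_add, hx, hy, map_add, map_add]
  | single g m =>
    rw [bd_single, chm_single, bd_single, map_add, map_sum]
    simp only [map_zsmul, chm_single]
    congr 1
    · rw [h, Function.comp_apply, map_inv]; rfl
    · refine Finset.sum_congr rfl fun j _ => ?_
      rw [Fin.comp_contractNth _ (· * ·) (fun a b => map_mul f a b)]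

/-- Functoriality of the bar complex. -/
noncomputable abbrev barMap {G M H N : Type} [Group G] [AddCommGroup M] [Group H] [AddCommGroup N]
    {ρ : G →* AddMonoid.End M} {σ : H →* AddMonoid.End N} (f : G →* H) (φ : M →+ N)
    (h : ∀ g m, φ (ρ g m) = σ (f g) (φ m)) : CMap (bar ρ) (bar σ) where
  f n := chm f φ n
  comm n x := chm_comm f φ h n x

/-- Two additive maps out of bar chains agree if they agree on generators. -/
lemma bar_ext {G M A : Type} [AddCommGroup M] [AddCommGroup A] {n : ℕ}
    {f g : ((Fin n → G) →₀ M) →+ A}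
    (h : ∀ v m, f (Finsupp.single v m) = g (Finsupp.single v m)) (x) : f x = g x :=
  DFunLike.congr_fun (Finsupp.addHom_ext h) x

lemma mapRange_exact {I M₁ M₂ M₃ : Type} [AddCommGroup M₁] [AddCommGroup M₂] [AddCommGroup M₃]
    (i : M₁ →+ M₂) (p : M₂ →+ M₃) (inj : Function.Injective i) (exact : ∀ x, p x = 0 → ∃ y, i y = x)
    (x : I →₀ M₂) (hx : Finsupp.mapRange p (map_zero p) x = 0) :
    ∃ y : I →₀ M₁, Finsupp.mapRange i (map_zero i) y = x := by
  have hx' : ∀ g, ∃ y, i y = x g := fun g => exact _ (by simpa using DFunLike.congr_fun hx g)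
  choose y hy using hx'
  have h0 : ∀ g, y g ≠ 0 → g ∈ x.support := by
    intro g hg
    rw [Finsupp.mem_support_iff, ← hy]
    exact fun h => hg (inj (by rw [h, map_zero]))
  refine ⟨Finsupp.onFinset x.support y h0, ?_⟩
  refine Finsupp.ext fun g => ?_
  simp [hy]

lemma ses_bar {G M₁ M₂ M₃ : Type} [Group G] [AddCommGroup M₁] [AddCommGroup M₂] [AddCommGroup M₃]
    {ρ₁ : G →* AddMonoid.End M₁} {ρ₂ : G →* AddMonoid.End M₂} {ρ₃ : G →* AddMonoid.End M₃}
    (i : M₁ →+ M₂) (p : M₂ →+ M₃) (hi : ∀ g m, i (ρ₁ g m) = ρ₂ g (i m))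
    (hp : ∀ g m, p (ρ₂ g m) = ρ₃ g (p m)) (inj : Function.Injective i)
    (surj : Function.Surjective p) (zero : ∀ x, p (i x) = 0) (exact : ∀ x, p x = 0 → ∃ y, i y = x) :
    SES (barMap (ρ := ρ₁) (σ := ρ₂) (MonoidHom.id G) i hi)
      (barMap (ρ := ρ₂) (σ := ρ₃) (MonoidHom.id G) p hp) := by
  refine ⟨fun n x y h => ?_, fun n y => ?_, fun n x => ?_, fun n x hx => ?_⟩
  · rw [chm_id, chm_id] at h
    exact Finsupp.mapRange_injective _ (map_zero _) inj h
  · obtain ⟨x, hx⟩ := Finsupp.mapRange_surjective _ (map_zero _) surj y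
    exact ⟨x, by rw [chm_id, hx]⟩
  · rw [chm_id, chm_id]
    refine Finsupp.ext fun g => ?_
    simp [zero]
  · rw [chm_id] at hx
    obtain ⟨y, hy⟩ := mapRange_exact i p inj exact x hx
    exact ⟨y, by rw [chm_id]; exact hy⟩

lemma contract_cons_zero {G : Type} [Group G] {n : ℕ} (a : G) (g : Fin (n + 1) → G) :
    Fin.contractNth 0 (· * ·) (Fin.cons a g : Fin (n + 2) → G) =
      Fin.cons (a * g 0) (fun i : Fin n => g i.succ) := by
  funext k
  refine Fin.cases ?_ (fun k => ?_) k
  · simp [Fin.contractNth]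
  · simp [Fin.contractNth]

lemma contract_cons_succ {G : Type} [Group G] {n : ℕ} (a : G) (g : Fin (n + 1) → G)
    (i : Fin (n + 1)) :
    Fin.contractNth i.succ (· * ·) (Fin.cons a g : Fin (n + 2) → G) =
      Fin.cons a (Fin.contractNth i (· * ·) g) := by
  funext k
  refine Fin.cases ?_ (fun k => ?_) k
  · simp [Fin.contractNth]
  · simp only [Fin.contractNth, Fin.cons_succ, Fin.val_succ, Fin.castSucc_succ]
    split_ifs <;> first | rfl | omega

/-- Acyclicity in positive degrees. -/
def Acyc (A : Cx) : Prop := ∀ n x, A.cyc (n + 1) x → ∃ y, x = A.d (n + 1) y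

lemma acyc_bar {G M : Type} [Group G] [AddCommGroup M] (ρ : G →* AddMonoid.End M)
    (θ : M →+ (G →₀ M)) (h1 : ∀ g m, θ (ρ g m) = Finsupp.mapDomain (fun h => g * h) (θ m))
    (h2 : ∀ m, (θ m).sum (fun h m' => ρ h m') = m) : Acyc (bar ρ) := by
  let c : ∀ {n}, (Fin n → G) → (G →₀ M) →+ ((Fin (n+1) → G) →₀ M) := fun {n} g =>
    Finsupp.liftAddHom fun h => Finsupp.singleAddHom (Fin.cons h⁻¹ g)
  have c_single : ∀ {n} (g : Fin n → G) h m, c g (Finsupp.single h m) =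
      Finsupp.single (Fin.cons h⁻¹ g) m := by intro n g h m; simp [c]
  let s : ∀ n, ((Fin n → G) →₀ M) →+ ((Fin (n+1) → G) →₀ M) := fun n =>
    Finsupp.liftAddHom fun g => (c g).comp θ
  have s_single : ∀ {n} (g : Fin n → G) m, s n (Finsupp.single g m) = c g (θ m) := by
    intro n g m; simp [s]
  have key : ∀ n x, x = bd ρ (n+1) (s (n+1) x) + s n (bd ρ n x) := by
    intro n x
    induction x using Finsupp.induction_linear with
    | zero => simp
    | add x y hx hy => 
      nth_rw 1 [hx, hy]
      simp only [map_add]; abel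
    | single g m =>
      rw [s_single, bd_single, map_add, map_sum]
      simp only [map_zsmul, s_single, h1]
      nth_rw 1 [← h2 m]
      generalize θ m = t
      induction t using Finsupp.induction_linear with
      | zero => simp
      | add x y hx hy =>
        rw [Finsupp.sum_add_index' (by simp) (by simp), Finsupp.single_add, hx, hy,
          Finsupp.mapDomain_add]
        simp only [map_add, smul_add, Finset.sum_add_distrib]
        abel
      | single h m =>
        rw [Finsupp.sum_single_index (by simp), Finsupp.mapDomain_single]
        simp only [c_single]
        rw [bd_single, Fin.sum_univ_succ]
        simp only [contract_cons_succ, contract_cons_zero, Fin.cons_succ, Fin.cons_zero, inv_inv,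
          mul_inv_rev, Fin.val_succ, Fin.val_zero]
        simp only [pow_succ, mul_neg, mul_one, neg_neg, neg_smul, Finset.sum_neg_distrib]
        abel
  intro n x hx
  refine ⟨s (n+1) x, ?_⟩
  have h3 := key n x
  have h4 : bd ρ n x = 0 := hx
  rw [h4, map_zero, add_zero] at h3
  exact h3

lemma good_of_acyc {A B : Cx} (hA : Acyc A) (hB : Acyc B) (f : CMap A B) (hs : Surj f 0)
    (hi : Inj f 0) (m : ℕ) : Good f m := by
  refine ⟨fun n _ => ?_, fun n _ => ?_⟩
  · cases n with
    | zero => exact hs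
    | succ n =>
      intro b hb
      obtain ⟨c, hc⟩ := hB _ b hb
      exact ⟨0, A.cyc_zero, c, by simpa using hc⟩
  · cases n with
    | zero => exact hi
    | succ n => exact fun a ha _ => hA _ a ha

end GLStab

namespace GLStab

/-- The action on finitely supported functions. -/
noncomputable def fs {G X M : Type} [Group G] [AddCommGroup M] (α : G →* Equiv.Perm X)
    (ρ : G →* AddMonoid.End M) : G →* AddMonoid.End (X →₀ M) where
  toFun g := (Finsupp.mapDomain.addMonoidHom (α g)).comp (Finsupp.mapRange.addMonoidHom (op ρ g))
  map_one' := by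
    apply Finsupp.addHom_ext
    intro x m
    change Finsupp.mapDomain (α 1) (Finsupp.mapRange (op ρ 1) (map_zero _) (Finsupp.single x m)) = Finsupp.single x m
    rw [Finsupp.mapRange_single, Finsupp.mapDomain_single, op_apply]
    simp
  map_mul' a b := by
    apply Finsupp.addHom_ext
    intro x m
    change Finsupp.mapDomain (α (a * b)) (Finsupp.mapRange (op ρ (a * b)) (map_zero _) (Finsupp.single x m)) =
      Finsupp.mapDomain (α a) (Finsupp.mapRange (op ρ a) (map_zero _)
        (Finsupp.mapDomain (α b) (Finsupp.mapRange (op ρ b) (map_zero _) (Finsupp.single x m))))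
    simp only [Finsupp.mapRange_single, Finsupp.mapDomain_single, op_apply]
    simp

lemma fs_single {G X M : Type} [Group G] [AddCommGroup M] (α : G →* Equiv.Perm X)
    (ρ : G →* AddMonoid.End M) (g : G) (x : X) (m : M) :
    fs α ρ g (Finsupp.single x m) = Finsupp.single (α g x) (ρ g m) := by
  change Finsupp.mapDomain (α g) (Finsupp.mapRange (op ρ g) (map_zero _) (Finsupp.single x m)) = _
  rw [Finsupp.mapRange_single, Finsupp.mapDomain_single]; rfl

/-- Restriction of an action to an invariant subgroup. -/
def subAct {G M : Type} [Group G] [AddCommGroup M] (ρ : G →* AddMonoid.End M) (S : AddSubgroup M)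
    (h : ∀ g m, m ∈ S → ρ g m ∈ S) : G →* AddMonoid.End S where
  toFun g := ((op ρ g).comp S.subtype).codRestrict S (fun m => h g _ m.2)
  map_one' := by
    apply AddMonoidHom.ext
    intro x
    apply Subtype.ext
    change ρ 1 x = x
    rw [map_one]; rfl
  map_mul' a b := by
    apply AddMonoidHom.ext
    intro x
    apply Subtype.ext
    change ρ (a * b) x = ρ a (ρ b x)
    rw [map_mul]; rfl

lemma subAct_coe {G M : Type} [Group G] [AddCommGroup M] (ρ : G →* AddMonoid.End M)
    (S : AddSubgroup M) (h : ∀ g m, m ∈ S → ρ g m ∈ S) (g : G) (m : S) :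
    ((subAct ρ S h g m : S) : M) = ρ g m := rfl

lemma act_mul {G M : Type} [Group G] [AddCommGroup M] (ρ : G →* AddMonoid.End M) (a b : G) (m : M) :
    ρ (a * b) m = ρ a (ρ b m) := by rw [map_mul]; rfl

lemma act_one {G M : Type} [Group G] [AddCommGroup M] (ρ : G →* AddMonoid.End M) (m : M) :
    ρ 1 m = m := by rw [map_one]; rfl

/-- The free action on `G →₀ M`. -/
noncomputable abbrev freeAct (G M : Type) [Group G] [AddCommGroup M] :
    G →* AddMonoid.End (G →₀ M) :=
  fs (MulAction.toPermHom G G) (1 : G →* AddMonoid.End M)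

lemma freeAct_single {G M : Type} [Group G] [AddCommGroup M] (g h : G) (m : M) :
    freeAct G M g (Finsupp.single h m) = Finsupp.single (g * h) m := by
  rw [fs_single]; rfl

/-- The surjection from the free module. -/
noncomputable def cov {G M : Type} [Group G] [AddCommGroup M] (ρ : G →* AddMonoid.End M) :
    (G →₀ M) →+ M := Finsupp.liftAddHom fun h => op ρ h

lemma cov_single {G M : Type} [Group G] [AddCommGroup M] (ρ : G →* AddMonoid.End M) (h : G) (m : M) :
    cov ρ (Finsupp.single h m) = ρ h m := by
  rw [cov, Finsupp.liftAddHom_apply_single]; rfl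

lemma cov_equi {G M : Type} [Group G] [AddCommGroup M] (ρ : G →* AddMonoid.End M) (g : G)
    (x : G →₀ M) : cov ρ (freeAct G M g x) = ρ g (cov ρ x) := by
  induction x using Finsupp.induction_linear with
  | zero => simp
  | add x y hx hy => simp only [map_add, hx, hy]
  | single h m => rw [freeAct_single, cov_single, cov_single, act_mul]

lemma cov_surj {G M : Type} [Group G] [AddCommGroup M] (ρ : G →* AddMonoid.End M) :
    Function.Surjective (cov ρ) := fun m => ⟨Finsupp.single 1 m, by rw [cov_single, act_one]⟩

/-- The action on the kernel. -/
noncomputable abbrev kerAct {G M : Type} [Group G] [AddCommGroup M] (ρ : G →* AddMonoid.End M) :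
    G →* AddMonoid.End (cov ρ).ker :=
  subAct (freeAct G M) (cov ρ).ker (fun g m hm => by
    rw [AddMonoidHom.mem_ker] at *; rw [cov_equi, hm, map_zero])

lemma exists_equi_section {G S : Type} [Group G] [Group S] (f : S →* G)
    (hf : Function.Injective f) : ∃ σ : G → S, ∀ s h, σ (f s * h) = s * σ h := by
  classical
  let r : G → G := fun h => (Quotient.mk (QuotientGroup.rightRel f.range) h).out
  have h1 : ∀ h, ∃ s, f s * r h = h := by
    intro h
    have : QuotientGroup.rightRel f.range (r h) h := Quotient.exact (Quotient.out_eq _)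
    rw [QuotientGroup.rightRel_apply] at this
    obtain ⟨s, hs⟩ := this
    exact ⟨s, by rw [hs]; simp⟩
  choose σ hσ using h1
  refine ⟨σ, fun s h => hf ?_⟩
  have h2 : r (f s * h) = r h := by
    have : Quotient.mk (QuotientGroup.rightRel f.range) (f s * h) = Quotient.mk _ h := by
      apply Quotient.sound
      change QuotientGroup.rightRel f.range _ _
      rw [QuotientGroup.rightRel_apply]
      exact ⟨s⁻¹, by simp⟩
    simp only [r, this]
  have h3 := hσ (f s * h)
  rw [h2] at h3
  replace h3 := h3.trans (congrArg (f s * ·) (hσ h).symm)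
  simp only [← mul_assoc] at h3
  rw [mul_right_cancel h3, map_mul]

lemma acyc_free {G S M : Type} [Group G] [Group S] [AddCommGroup M] (f : S →* G)
    (hf : Function.Injective f) : Acyc (bar ((freeAct G M).comp f)) := by
  obtain ⟨σ, hσ⟩ := exists_equi_section f hf
  let θ : (G →₀ M) →+ (S →₀ (G →₀ M)) := Finsupp.liftAddHom fun h =>
    (Finsupp.singleAddHom (σ h)).comp (Finsupp.singleAddHom ((f (σ h))⁻¹ * h))
  have hθ : ∀ h m, θ (Finsupp.single h m) = Finsupp.single (σ h)
      (Finsupp.single ((f (σ h))⁻¹ * h) m) := by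
    intro h m; simp [θ]
  apply acyc_bar _ θ
  · intro g m
    induction m using Finsupp.induction_linear with
    | zero => simp
    | add x y hx hy => simp only [map_add, hx, hy, Finsupp.mapDomain_add]
    | single h m =>
      rw [MonoidHom.comp_apply, freeAct_single, hθ, hθ, Finsupp.mapDomain_single, hσ, map_mul,
        mul_inv_rev, mul_assoc, inv_mul_cancel_left]
  · intro m
    induction m using Finsupp.induction_linear with
    | zero => simp
    | add x y hx hy =>
      rw [map_add, Finsupp.sum_add_index' (by simp) (by simp), hx, hy]
    | single h m =>
      rw [hθ, Finsupp.sum_single_index (by simp), MonoidHom.comp_apply, freeAct_single,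
        mul_inv_cancel_left]

lemma acyc_fs_free {G X M : Type} [Group G] [AddCommGroup M] (α : G →* Equiv.Perm X) :
    Acyc (bar (fs α (freeAct G M))) := by
  let θ : (X →₀ (G →₀ M)) →+ (G →₀ (X →₀ (G →₀ M))) :=
    Finsupp.liftAddHom (α := X) (M := G →₀ M) (N := G →₀ (X →₀ (G →₀ M))) fun y =>
    (Finsupp.liftAddHom (α := G) (M := M) (N := G →₀ (X →₀ (G →₀ M))) fun h =>
      (Finsupp.singleAddHom h).comp
      ((Finsupp.singleAddHom (α h⁻¹ y)).comp (Finsupp.singleAddHom 1)) :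
      (G →₀ M) →+ (G →₀ (X →₀ (G →₀ M))))
  have hθ : ∀ y h m, θ (Finsupp.single y (Finsupp.single h m)) = Finsupp.single h
      (Finsupp.single (α h⁻¹ y) (Finsupp.single 1 m)) := by
    intro y h m
    simp only [θ]
    rw [Finsupp.liftAddHom_apply_single, Finsupp.liftAddHom_apply_single]
    rfl
  apply acyc_bar _ θ
  · intro g m
    induction m using Finsupp.induction_linear with
    | zero => simp
    | add x y hx hy => simp only [map_add, hx, hy, Finsupp.mapDomain_add]
    | single y m =>
    rw [fs_single]
    induction m using Finsupp.induction_linear with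
    | zero => simp
    | add x y hx hy => simp only [map_add, Finsupp.single_add, hx, hy, Finsupp.mapDomain_add]
    | single h m =>
      rw [freeAct_single, hθ, hθ, Finsupp.mapDomain_single, mul_inv_rev, map_mul,
        Equiv.Perm.mul_apply, map_inv α g, Equiv.Perm.inv_def, Equiv.symm_apply_apply]
  · intro m
    induction m using Finsupp.induction_linear with
    | zero => simp
    | add x y hx hy =>
      rw [map_add, Finsupp.sum_add_index' (by simp) (by simp), hx, hy]
    | single y m =>
    induction m using Finsupp.induction_linear with
    | zero => simp
    | add x y hx hy =>
      rw [Finsupp.single_add, map_add, Finsupp.sum_add_index' (by simp) (by simp), hx, hy]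
    | single h m =>
      rw [hθ, Finsupp.sum_single_index (by simp), fs_single, freeAct_single,
        map_inv α h, Equiv.Perm.inv_def, Equiv.apply_symm_apply, mul_one]

lemma bd_zero_single {G M : Type} [Group G] [AddCommGroup M] (ρ : G →* AddMonoid.End M)
    (g : Fin 1 → G) (m : M) (v : Fin 0 → G) : bd ρ 0 (Finsupp.single g m) =
      Finsupp.single v (ρ (g 0)⁻¹ m) - Finsupp.single v m := by
  rw [bd_single]
  simp only [Subsingleton.elim _ v]
  simp [sub_eq_add_neg]

lemma conj_equi {G M : Type} [Group G] [AddCommGroup M] (ρ : G →* AddMonoid.End M) (g h : G) (m : M) :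
    op ρ g (ρ h m) = ρ ((MulAut.conj g).toMonoidHom h) (op ρ g m) := by
  rw [op_apply, op_apply, ← act_mul, ← act_mul]
  simp

lemma conj_homo (n : ℕ) : ∀ {G M : Type} [Group G] [AddCommGroup M] (ρ : G →* AddMonoid.End M)
    (g : G) (x : (Fin n → G) →₀ M), (bar ρ).cyc n x →
    ∃ c, chm (MulAut.conj g).toMonoidHom (op ρ g) n x = x + bd ρ n c := by
  induction n with
  | zero =>
    intro G M _ _ ρ g x _
    induction x using Finsupp.induction_linear with
    | zero => exact ⟨0, by simp⟩
    | add x y hx hy =>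
      obtain ⟨c, hc⟩ := hx trivial
      obtain ⟨c', hc'⟩ := hy trivial
      exact ⟨c + c', by rw [map_add, hc, hc', map_add]; abel⟩
    | single v m =>
      refine ⟨Finsupp.single (fun _ => g⁻¹) m, ?_⟩
      rw [chm_single, bd_zero_single ρ _ m v, Subsingleton.elim (_ ∘ v) v, inv_inv]
      simp
      rfl
  | succ n ih =>
    intro G M _ _ ρ g x hx
    have S := ses_bar (ρ₁ := kerAct ρ) (ρ₂ := freeAct G M) (ρ₃ := ρ) (cov ρ).ker.subtype (cov ρ)
      (fun g m => rfl) (fun g m => cov_equi ρ g m) Subtype.val_injective (cov_surj ρ)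
      (fun x => x.2) (fun x hx => ⟨⟨x, hx⟩, rfl⟩)
    set i := barMap (ρ := kerAct ρ) (σ := freeAct G M) (MonoidHom.id G) (cov ρ).ker.subtype
      (fun g m => rfl) with hi
    set p := barMap (ρ := freeAct G M) (σ := ρ) (MonoidHom.id G) (cov ρ)
      (fun g m => cov_equi ρ g m) with hp
    obtain ⟨z, hz⟩ := S.surj _ x
    obtain ⟨y, hy⟩ := S.exact n (bd (freeAct G M) n z) (by
      rw [p.comm, hz]; exact hx)
    obtain ⟨c, hc⟩ := ih (kerAct ρ) g y (i.cyc_inj S.inj (by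
      rw [hy]; exact (bar (freeAct G M)).cyc_d n z))
    have e1 : ∀ n (y : (Fin n → G) →₀ (cov ρ).ker), i.f n (chm (MulAut.conj g).toMonoidHom (op (kerAct ρ) g) n y) =
        chm (MulAut.conj g).toMonoidHom (op (freeAct G M) g) n (i.f n y) := by
      intro n y
      rw [hi]
      induction y using Finsupp.induction_linear with
      | zero => simp
      | add x y hx hy => simp only [map_add, hx, hy]
      | single v m => simp only [chm_single]; rfl
    have e2 : ∀ n (y : (Fin n → G) →₀ (G →₀ M)), p.f n (chm (MulAut.conj g).toMonoidHom (op (freeAct G M) g) n y) =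
        chm (MulAut.conj g).toMonoidHom (op ρ g) n (p.f n y) := by
      intro n y
      rw [hp]
      induction y using Finsupp.induction_linear with
      | zero => simp
      | add x y hx hy => simp only [map_add, hx, hy]
      | single v m => 
        simp only [chm_single]
        simp only [op_apply, cov_equi]
        rfl
    obtain ⟨w, hw⟩ := acyc_free (M := M) (MonoidHom.id G) Function.injective_id n
      (chm (MulAut.conj g).toMonoidHom (op (freeAct G M) g) (n+1) z - z - i.f _ c) (by
        change bd (freeAct G M) n _ = 0
        rw [map_sub, map_sub, ← chm_comm _ _ (fun h m => conj_equi _ g h m), ← hy, ← i.comm, ← e1, hc,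
          map_add]
        abel)
    refine ⟨p.f _ w, ?_⟩
    have h5 := congrArg (p.f _) hw
    rw [map_sub, map_sub, e2, hz, S.zero, sub_zero, sub_eq_iff_eq_add'] at h5
    rw [h5]
    congr 1
    exact p.comm _ w

lemma shapiro_surj {G S X M : Type} [Group G] [Group S] [AddCommGroup M] (f : S →* G)
    (α : G →* Equiv.Perm X) (x : X) (ht : ∀ y, ∃ g, α g x = y)
    (ρ : G →* AddMonoid.End M) (h : ∀ g m, Finsupp.singleAddHom x ((ρ.comp f) g m) =
      fs α ρ (f g) (Finsupp.singleAddHom x m)) :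
    Surj (barMap (ρ := ρ.comp f) (σ := fs α ρ) f (Finsupp.singleAddHom x) h) 0 := by
  rw [← rel_zero]
  intro b
  induction b using Finsupp.induction_linear with
  | zero => exact ⟨0, 0, by simp⟩
  | add b b' hb hb' =>
    obtain ⟨a, c, rfl⟩ := hb
    obtain ⟨a', c', rfl⟩ := hb'
    exact ⟨a + a', c + c', by simp only [map_add]; abel⟩
  | single v t =>
  induction t using Finsupp.induction_linear with
  | zero => exact ⟨0, 0, by simp⟩
  | add t t' hb hb' =>
    obtain ⟨a, c, hb⟩ := hb
    obtain ⟨a', c', hb'⟩ := hb'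
    exact ⟨a + a', c + c', by rw [Finsupp.single_add, hb, hb']; simp only [map_add]; abel⟩
  | single y m =>
    obtain ⟨k, rfl⟩ := ht y
    refine ⟨Finsupp.single default (ρ k⁻¹ m), - Finsupp.single (fun _ => k) (Finsupp.single (α k x) m), ?_⟩
    rw [map_neg, bd_zero_single _ _ _ v, chm_single, Subsingleton.elim (_ ∘ _) v, fs_single, map_inv α,
      Equiv.Perm.inv_def, Equiv.symm_apply_apply]
    simp

lemma shapiro_inj {G S X M : Type} [Group G] [Group S] [AddCommGroup M] (f : S →* G)
    (α : G →* Equiv.Perm X) (x : X) (ht : ∀ y, ∃ g, α g x = y)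
    (hs : ∀ g, α g x = x → ∃ s, f s = g)
    (ρ : G →* AddMonoid.End M) (h : ∀ g m, Finsupp.singleAddHom x ((ρ.comp f) g m) =
      fs α ρ (f g) (Finsupp.singleAddHom x m)) :
    Inj (barMap (ρ := ρ.comp f) (σ := fs α ρ) f (Finsupp.singleAddHom x) h) 0 := by
  classical
  have ht' : ∀ y, ∃ g, α g x = y ∧ (y = x → g = 1) := by
    intro y
    by_cases hy : y = x
    · exact ⟨1, by simp [hy], fun _ => rfl⟩
    · obtain ⟨g, hg⟩ := ht y
      exact ⟨g, hg, fun h => absurd h hy⟩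
  choose k hk hk1 using ht'
  let τ : ((Fin 0 → G) →₀ (X →₀ M)) →+ ((Fin 0 → S) →₀ M) :=
    Finsupp.liftAddHom (α := Fin 0 → G) (M := X →₀ M) (N := (Fin 0 → S) →₀ M) fun _ =>
    Finsupp.liftAddHom (α := X) (M := M) (N := (Fin 0 → S) →₀ M) fun y => (Finsupp.singleAddHom default).comp (op ρ (k y)⁻¹)
  have hτ : ∀ v y m, τ (Finsupp.single v (Finsupp.single y m)) =
      Finsupp.single default (ρ (k y)⁻¹ m) := by
    intro v y m
    simp only [τ]
    rw [Finsupp.liftAddHom_apply_single, Finsupp.liftAddHom_apply_single]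
    rfl
  have h1 : ∀ b, ∃ a, τ (bd (fs α ρ) 0 b) = bd (ρ.comp f) 0 a := by
    intro b
    induction b using Finsupp.induction_linear with
    | zero => exact ⟨0, by simp⟩
    | add b b' hb hb' =>
      obtain ⟨a, h1⟩ := hb
      obtain ⟨a', h2⟩ := hb'
      exact ⟨a + a', by simp only [map_add, h1, h2]⟩
    | single v t =>
    induction t using Finsupp.induction_linear with
    | zero => exact ⟨0, by simp⟩
    | add t t' hb hb' =>
      obtain ⟨a, h1⟩ := hb
      obtain ⟨a', h2⟩ := hb'
      exact ⟨a + a', by simp only [map_add, Finsupp.single_add, h1, h2]⟩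
    | single y m =>
      obtain ⟨s, hs⟩ := hs ((k (α (v 0)⁻¹ y))⁻¹ * (v 0)⁻¹ * k y) (by
        rw [map_mul, map_mul, Equiv.Perm.mul_apply, Equiv.Perm.mul_apply, hk, map_inv,
          Equiv.Perm.inv_eq_iff_eq, hk])
      refine ⟨Finsupp.single (fun _ => s⁻¹) (ρ (k y)⁻¹ m), ?_⟩
      rw [bd_zero_single _ _ _ default, bd_zero_single _ _ _ default, map_sub, fs_single, hτ, hτ, inv_inv,
        MonoidHom.comp_apply, hs, ← act_mul, ← act_mul, mul_inv_cancel_right]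
  have h2 : ∀ a, τ (chm f (Finsupp.singleAddHom x) 0 a) = a := by
    intro a
    induction a using Finsupp.induction_linear with
    | zero => simp
    | add x y hx hy => simp only [map_add, hx, hy]
    | single v m =>
      rw [chm_single, Finsupp.singleAddHom_apply, hτ, hk1 x rfl, inv_one, act_one,
        Subsingleton.elim v default]
  rintro a _ ⟨b, hb⟩
  obtain ⟨a', ha'⟩ := h1 b
  refine ⟨a', ?_⟩
  rw [← ha', ← h2 a]
  exact congrArg τ hb.symm

lemma shapiro_aux {G S X M : Type} [Group G] [Group S] [AddCommGroup M] (f : S →* G)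
    (α : G →* Equiv.Perm X) (x : X) (hs' : ∀ s, α (f s) x = x) (ρ : G →* AddMonoid.End M)
    (g : S) (m : M) : Finsupp.singleAddHom x ((ρ.comp f) g m) =
      fs α ρ (f g) (Finsupp.singleAddHom x m) := by
  rw [Finsupp.singleAddHom_apply, Finsupp.singleAddHom_apply, fs_single, hs']; rfl

lemma fs_equi {G X M N : Type} [Group G] [AddCommGroup M] [AddCommGroup N] (α : G →* Equiv.Perm X)
    (ρ : G →* AddMonoid.End M) (σ : G →* AddMonoid.End N) (φ : M →+ N)
    (h : ∀ g m, φ (ρ g m) = σ g (φ m)) (g : G) (t : X →₀ M) :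
    Finsupp.mapRange.addMonoidHom φ (fs α ρ g t) = fs α σ g (Finsupp.mapRange.addMonoidHom φ t) := by
  induction t using Finsupp.induction_linear with
  | zero => simp
  | add x y hx hy => simp only [map_add, hx, hy]
  | single y m => simp [fs_single, h]

lemma shapiro (m : ℕ) : ∀ {G S X M : Type} [Group G] [Group S] [AddCommGroup M] (f : S →* G)
    (_ : Function.Injective f)
    (α : G →* Equiv.Perm X) (x : X) (_ : ∀ y, ∃ g, α g x = y) (hs' : ∀ s, α (f s) x = x)
    (_ : ∀ g, α g x = x → ∃ s, f s = g) (ρ : G →* AddMonoid.End M),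
    Good (barMap (ρ := ρ.comp f) (σ := fs α ρ) f (Finsupp.singleAddHom x)
      (shapiro_aux f α x hs' ρ)) m := by
  induction m with
  | zero =>
    intro G S X M _ _ _ f hf α x ht hs' hs ρ
    refine ⟨fun n hn => ?_, fun n hn => absurd hn (by omega)⟩
    obtain rfl : n = 0 := by omega
    exact shapiro_surj f α x ht ρ _
  | succ m ih =>
    intro G S X M _ _ _ f hf α x ht hs' hs ρ
    have SA := ses_bar (ρ₁ := (kerAct ρ).comp f) (ρ₂ := (freeAct G M).comp f) (ρ₃ := ρ.comp f)
      (cov ρ).ker.subtype (cov ρ)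
      (fun g m => rfl) (fun g m => cov_equi ρ (f g) m) Subtype.val_injective (cov_surj ρ)
      (fun x => x.2) (fun x hx => ⟨⟨x, hx⟩, rfl⟩)
    have SB := ses_bar (ρ₁ := fs α (kerAct ρ)) (ρ₂ := fs α (freeAct G M)) (ρ₃ := fs α ρ)
      (Finsupp.mapRange.addMonoidHom (cov ρ).ker.subtype) (Finsupp.mapRange.addMonoidHom (cov ρ))
      (fun g m => fs_equi α _ _ _ (fun g m => rfl) g m)
      (fun g m => fs_equi α _ _ _ (fun g m => cov_equi ρ g m) g m)
      (Finsupp.mapRange_injective _ (map_zero _) Subtype.val_injective)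
      (Finsupp.mapRange_surjective _ (map_zero _) (cov_surj ρ))
      (fun x => by
        refine Finsupp.ext fun y => ?_
        exact AddMonoidHom.mem_ker.1 (x y).2)
      (fun x hx => mapRange_exact (cov ρ).ker.subtype (cov ρ) Subtype.val_injective
        (fun x hx => ⟨⟨x, hx⟩, rfl⟩) x hx)
    refine good_step SA SB (f₁ := barMap (ρ := (kerAct ρ).comp f) (σ := fs α (kerAct ρ)) f
      (Finsupp.singleAddHom x) (shapiro_aux f α x hs' _))
      (f₂ := barMap (ρ := (freeAct G M).comp f) (σ := fs α (freeAct G M)) f (Finsupp.singleAddHom x)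
      (shapiro_aux f α x hs' _)) ?_ ?_ ?_ ?_
    · intro n y
      induction y using Finsupp.induction_linear with
      | zero => simp
      | add x y hx hy => simp only [map_add, hx, hy]
      | single v m => simp [chm_single]
    · intro n y
      induction y using Finsupp.induction_linear with
      | zero => simp
      | add x y hx hy => simp only [map_add, hx, hy]
      | single v m => simp [chm_single]
    · exact good_of_acyc (acyc_free f hf) (acyc_fs_free α) _ (shapiro_surj f α x ht _ _)
        (shapiro_inj f α x ht hs _ _) _
    · intro k hk
      obtain rfl : k = m := by omega
      exact ih f hf α x ht hs' hs _

end GLStab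

namespace GLStab

section Lists

/-- Prefixing. -/
noncomputable def pre {W : Type} (t : List W) : (List W →₀ ℤ) →+ (List W →₀ ℤ) :=
  Finsupp.mapDomain.addMonoidHom (fun l => t ++ l)

lemma pre_single {W : Type} (t l : List W) (n : ℤ) :
    pre t (Finsupp.single l n) = Finsupp.single (t ++ l) n := by simp [pre]

lemma pre_nil {W : Type} (x : List W →₀ ℤ) : pre [] x = x := by
  exact Finsupp.mapDomain_id

lemma pre_cons {W : Type} (v : W) (t : List W) (x : List W →₀ ℤ) :
    pre (v :: t) x = pre [v] (pre t x) := by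
  induction x using Finsupp.induction_linear with
  | zero => simp
  | add x y hx hy => simp only [map_add, hx, hy]
  | single l n => simp [pre_single]

/-- The boundary of a word. -/
noncomputable def delH {W : Type} : List W → (ℤ →+ (List W →₀ ℤ))
  | [] => 0
  | v :: l => Finsupp.singleAddHom l - (pre [v]).comp (delH l)

/-- The boundary map on words. -/
noncomputable def del {W : Type} : (List W →₀ ℤ) →+ (List W →₀ ℤ) :=
  Finsupp.liftAddHom (α := List W) (M := ℤ) (N := List W →₀ ℤ) delH

lemma del_single_nil {W : Type} (n : ℤ) : del (Finsupp.single ([] : List W) n) = 0 := by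
  rw [del, Finsupp.liftAddHom_apply_single, delH]; rfl

lemma del_single_cons {W : Type} (v : W) (l : List W) (n : ℤ) :
    del (Finsupp.single (v :: l) n) =
      Finsupp.single l n - pre [v] (del (Finsupp.single l n)) := by
  rw [del, Finsupp.liftAddHom_apply_single, Finsupp.liftAddHom_apply_single, delH]; rfl

lemma del_pre_one {W : Type} (v : W) (x : List W →₀ ℤ) :
    del (pre [v] x) = x - pre [v] (del x) := by
  induction x using Finsupp.induction_linear with
  | zero => simp
  | add x y hx hy => simp only [map_add, hx, hy]; abel
  | single l n => rw [pre_single, List.singleton_append, del_single_cons]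

lemma del_del {W : Type} (x : List W →₀ ℤ) : del (del x) = 0 := by
  induction x using Finsupp.induction_linear with
  | zero => simp
  | add x y hx hy => simp only [map_add, hx, hy, add_zero]
  | single l n =>
    induction l with
    | nil => rw [del_single_nil, map_zero]
    | cons v l ih => rw [del_single_cons, map_sub, del_pre_one, ih]; simp

/-- The correction term. -/
noncomputable def remd {W : Type} : List W → ((List W →₀ ℤ) →+ (List W →₀ ℤ))
  | [] => 0
  | v :: t => pre t - (pre [v]).comp (remd t)

lemma del_pre {W : Type} (t : List W) (x : List W →₀ ℤ) :
    del (pre t x) = (-1 : ℤ) ^ t.length • pre t (del x) + remd t x := by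
  induction t with
  | nil => simp [pre_nil, remd]
  | cons v t ih =>
    rw [pre_cons, del_pre_one, ih, remd, map_add, map_zsmul, ← pre_cons]
    simp only [AddMonoidHom.sub_apply, AddMonoidHom.comp_apply, List.length_cons, pow_succ,
      mul_neg, mul_one, neg_smul]
    abel

/-- Codimension one faces. -/
def Face {W : Type} (t' t : List W) : Prop := t'.Sublist t ∧ t'.length + 1 = t.length

/-- Chains supported on a set of words. -/
def sup {W : Type} (S : Set (List W)) : AddSubgroup (List W →₀ ℤ) where
  carrier := {x | ∀ l, x l ≠ 0 → l ∈ S}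
  zero_mem' := by simp
  add_mem' {a b} ha hb l hl := by
    by_contra hS
    have h1 : a l = 0 := by by_contra h; exact hS (ha l h)
    have h2 : b l = 0 := by by_contra h; exact hS (hb l h)
    exact hl (by simp [h1, h2])
  neg_mem' {a} ha l hl := ha l (by simpa using hl)

lemma mem_sup {W : Type} {S : Set (List W)} {x : List W →₀ ℤ} :
    x ∈ sup S ↔ ∀ l, x l ≠ 0 → l ∈ S := Iff.rfl

lemma single_mem_sup {W : Type} {S : Set (List W)} {l : List W} (h : l ∈ S) (n : ℤ) :
    Finsupp.single l n ∈ sup S := by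
  classical
  intro l' hl'
  rw [Finsupp.single_apply] at hl'
  split_ifs at hl' with h1
  · rwa [← h1]
  · exact absurd rfl hl'

lemma sup_mono {W : Type} {S T : Set (List W)} (h : S ⊆ T) {x} (hx : x ∈ sup S) : x ∈ sup T :=
  fun l hl => h (hx l hl)

/-- Induction on supported chains. -/
lemma map_mem_of_sup {W A : Type} [AddCommGroup A] {S : Set (List W)} (f : (List W →₀ ℤ) →+ A)
    (T : AddSubgroup A) (h : ∀ l ∈ S, ∀ n, f (Finsupp.single l n) ∈ T) {x} (hx : x ∈ sup S) :
    f x ∈ T := by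
  rw [← Finsupp.sum_single x, Finsupp.sum, map_sum]
  refine AddSubgroup.sum_mem _ fun l hl => h l (hx l ?_) _
  simpa using hl

lemma pre_mem {W : Type} {S T : Set (List W)} {t : List W} (h : ∀ l ∈ S, t ++ l ∈ T) {x}
    (hx : x ∈ sup S) : pre t x ∈ sup T :=
  map_mem_of_sup _ _ (fun l hl n => by rw [pre_single]; exact single_mem_sup (h l hl) n) hx

lemma remd_mem {W : Type} {S T : Set (List W)} {t : List W}
    (h : ∀ l ∈ S, ∀ t', Face t' t → t' ++ l ∈ T) {x} (hx : x ∈ sup S) : remd t x ∈ sup T := by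
  induction t generalizing T with
  | nil => exact zero_mem _
  | cons v t ih =>
    rw [remd, AddMonoidHom.sub_apply, AddMonoidHom.comp_apply]
    refine sub_mem (pre_mem (fun l hl => h l hl t ⟨List.sublist_cons_self _ _, rfl⟩) hx) ?_
    refine pre_mem (S := {l | v :: l ∈ T}) (fun l hl => hl) (ih ?_)
    intro l hl t' ht'
    exact h l hl (v :: t') ⟨ht'.1.cons_cons v, by simp [ht'.2]⟩

lemma del_mem {W : Type} {S T : Set (List W)} (h : ∀ l ∈ S, ∀ l', Face l' l → l' ∈ T) {x}
    (hx : x ∈ sup S) : del x ∈ sup T := by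
  refine map_mem_of_sup _ _ (fun l hl n => ?_) hx
  have := del_pre l (Finsupp.single [] n)
  rw [pre_single, List.append_nil, del_single_nil, map_zero, smul_zero, zero_add] at this
  rw [this]
  refine remd_mem (S := {[]}) ?_ (single_mem_sup (Set.mem_singleton _) n)
  rintro _ rfl t' ht'
  rw [List.append_nil]; exact h l hl t' ht'

/-- Functoriality in the alphabet. -/
noncomputable def lmap {W W' : Type} (g : W → W') : (List W →₀ ℤ) →+ (List W' →₀ ℤ) :=
  Finsupp.mapDomain.addMonoidHom (List.map g)

lemma lmap_single {W W' : Type} (g : W → W') (l : List W) (n : ℤ) :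
    lmap g (Finsupp.single l n) = Finsupp.single (l.map g) n := by simp [lmap]

lemma lmap_pre {W W' : Type} (g : W → W') (t : List W) (x : List W →₀ ℤ) :
    lmap g (pre t x) = pre (t.map g) (lmap g x) := by
  induction x using Finsupp.induction_linear with
  | zero => simp
  | add x y hx hy => simp only [map_add, hx, hy]
  | single l n => simp [pre_single, lmap_single]

lemma lmap_del {W W' : Type} (g : W → W') (x : List W →₀ ℤ) :
    lmap g (del x) = del (lmap g x) := by
  induction x using Finsupp.induction_linear with
  | zero => simp
  | add x y hx hy => simp only [map_add, hx, hy]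
  | single l n =>
    induction l with
    | nil => simp [del_single_nil, lmap_single]
    | cons v l ih => 
      rw [lmap_single, List.map_cons, del_single_cons, del_single_cons, map_sub, lmap_pre, ih, lmap_single]
      rfl

lemma lmap_mem {W W' : Type} {S : Set (List W)} {T : Set (List W')} {g : W → W'}
    (h : ∀ l ∈ S, l.map g ∈ T) {x} (hx : x ∈ sup S) : lmap g x ∈ sup T :=
  map_mem_of_sup _ _ (fun l hl n => by rw [lmap_single]; exact single_mem_sup (h l hl) n) hx

end Lists

section Ind
variable {F W : Type} [Field F] [AddCommGroup W] [Module F W]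

/-- Words independent modulo `U`. -/
def Ind : Submodule F W → List W → Prop
  | _, [] => True
  | U, v :: l => v ∉ U ∧ Ind (U ⊔ Submodule.span F {v}) l

/-- `U` together with the span of a word. -/
def sp : Submodule F W → List W → Submodule F W
  | U, [] => U
  | U, v :: l => sp (U ⊔ Submodule.span F {v}) l

lemma sp_eq (U : Submodule F W) (l : List W) : sp U l = U ⊔ Submodule.span F {v | v ∈ l} := by
  induction l generalizing U with
  | nil => simp [sp]
  | cons v l ih =>
    rw [sp, ih, sup_assoc, ← Submodule.span_union]
    congr 2
    ext x; simp

lemma le_sp (U : Submodule F W) (l : List W) : U ≤ sp U l := by rw [sp_eq]; exact le_sup_left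

lemma mem_sp (U : Submodule F W) {l : List W} {v : W} (h : v ∈ l) : v ∈ sp U l := by
  rw [sp_eq]; exact Submodule.mem_sup_right (Submodule.subset_span h)

lemma sp_le {U T : Submodule F W} {l : List W} (h : U ≤ T) (h' : ∀ v ∈ l, v ∈ T) : sp U l ≤ T := by
  rw [sp_eq]; exact sup_le h (Submodule.span_le.2 h')

lemma sp_append (U : Submodule F W) (s t : List W) : sp U (s ++ t) = sp (sp U s) t := by
  induction s generalizing U with
  | nil => rfl
  | cons v s ih => exact ih _

lemma sp_mono {U U' : Submodule F W} {l l' : List W} (h : U ≤ U') (h' : l ⊆ l') :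
    sp U l ≤ sp U' l' :=
  sp_le (h.trans (le_sp _ _)) fun _ hv => mem_sp _ (h' hv)

lemma Ind.mono {U U' : Submodule F W} {l : List W} (h : U' ≤ U) (hl : Ind U l) : Ind U' l := by
  induction l generalizing U U' with
  | nil => trivial
  | cons v l ih => exact ⟨fun hv => hl.1 (h hv), ih (sup_le_sup_right h _) hl.2⟩

lemma Ind.sublist {U : Submodule F W} {l l' : List W} (h : l'.Sublist l) (hl : Ind U l) :
    Ind U l' := by
  induction h generalizing U with
  | slnil => trivial
  | cons v h ih => exact ih (hl.2.mono le_sup_left)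
  | cons_cons v h ih => exact ⟨hl.1, ih hl.2⟩

lemma ind_append {U : Submodule F W} {s t : List W} :
    Ind U (s ++ t) ↔ Ind U s ∧ Ind (sp U s) t := by
  induction s generalizing U with
  | nil => simp [Ind, sp]
  | cons v s ih => simp [Ind, sp, ih, and_assoc]

lemma mem_of_mem_sp {A B : Submodule F W} {h : List W} {e : W} (hB : Ind B h) (hAB : A ≤ B)
    (he : e ∈ B) (he' : e ∈ sp A h) : e ∈ A := by
  induction h generalizing A B with
  | nil => exact he'
  | cons v l ih =>
    have := ih hB.2 (sup_le_sup_right hAB _) (Submodule.mem_sup_left he) he'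
    obtain ⟨a, ha, w, hw, rfl⟩ := Submodule.mem_sup.1 this
    obtain ⟨c, rfl⟩ := Submodule.mem_span_singleton.1 hw
    have h2 : c • v ∈ B := by simpa using sub_mem he (hAB ha)
    have h3 : c = 0 := by
      by_contra hc
      exact hB.1 ((Submodule.smul_mem_iff _ hc).1 h2)
    simpa [h3] using ha

lemma exch {U : Submodule F W} {v e : W} (hv : v ∉ U) (h : v ∈ U ⊔ Submodule.span F {e}) :
    e ∈ U ⊔ Submodule.span F {v} := by
  obtain ⟨a, ha, w, hw, rfl⟩ := Submodule.mem_sup.1 h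
  obtain ⟨c, rfl⟩ := Submodule.mem_span_singleton.1 hw
  have hc : c ≠ 0 := by rintro rfl; simp [ha] at hv
  have h1 : c • e ∈ U ⊔ Submodule.span F {a + c • e} := by
    have := sub_mem (Submodule.mem_sup_right (S := U)
      (Submodule.mem_span_singleton_self (R := F) (a + c • e))) (Submodule.mem_sup_left ha)
    simpa using this
  exact (Submodule.smul_mem_iff _ hc).1 h1

lemma Ind.cons_of_not_mem {U : Submodule F W} {l : List W} {e : W} (hl : Ind U l)
    (he : e ∉ sp U l) : Ind U (e :: l) := by
  refine ⟨fun h => he (le_sp _ _ h), ?_⟩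
  induction l generalizing U with
  | nil => trivial
  | cons v l ih =>
    refine ⟨fun h => he (le_sp _ l (exch hl.1 h)), ?_⟩
    have := ih hl.2 he
    rwa [sup_right_comm] at this

lemma finrank_sp [FiniteDimensional F W] {U : Submodule F W} {l : List W} (hl : Ind U l) :
    Module.finrank F (sp U l) = Module.finrank F U + l.length := by
  induction l generalizing U with
  | nil => rfl
  | cons v l ih =>
    rw [sp, ih hl.2, List.length_cons]
    have h1 := Submodule.finrank_sup_add_finrank_inf_eq U (Submodule.span F {v})
    have hv : v ≠ 0 := by rintro rfl; exact hl.1 (zero_mem _)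
    have h2 : U ⊓ Submodule.span F {v} = ⊥ := by
      rw [← disjoint_iff, Submodule.disjoint_span_singleton' hv]
      exact hl.1
    rw [h2, finrank_bot, finrank_span_singleton hv] at h1
    omega

/-- The words of length `k` in `E`, independent modulo `U`. -/
def Wd (U : Submodule F W) (E : Set W) (k : ℕ) : Set (List W) :=
  {l | l.length = k ∧ (∀ v ∈ l, v ∈ E) ∧ Ind U l}

lemma del_mem_Wd {U : Submodule F W} {E : Set W} {k : ℕ} {x} (hx : x ∈ sup (Wd U E (k + 1))) :
    del x ∈ sup (Wd U E k) := by
  refine del_mem ?_ hx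
  rintro l ⟨h1, h2, h3⟩ l' ⟨h4, h5⟩
  exact ⟨by omega, fun v hv => h2 v (h4.subset hv), h3.sublist h4⟩

end Ind
end GLStab

namespace GLStab
section Acyclic
variable {F W : Type} [Field F] [AddCommGroup W] [Module F W]

/-- Stripping a prefix. -/
noncomputable def strip {W : Type} (t : List W) : (List W →₀ ℤ) →+ (List W →₀ ℤ) :=
  Finsupp.comapDomain.addMonoidHom (f := fun l : List W => t ++ l)
    (fun _ _ h => List.append_cancel_left h)

lemma strip_apply {W : Type} (t l : List W) (x : List W →₀ ℤ) : strip t x l = x (t ++ l) := rfl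

lemma strip_pre {W : Type} (t : List W) (x : List W →₀ ℤ) : strip t (pre t x) = x := by
  ext l
  rw [strip_apply]
  exact Finsupp.mapDomain_apply (fun _ _ h => List.append_cancel_left h) _ _

lemma pre_strip {W : Type} (t σ : List W) (x : List W →₀ ℤ) [Decidable (σ.take t.length = t)] :
    pre t (strip t x) σ = if σ.take t.length = t then x σ else 0 := by
  split_ifs with h
  · obtain ⟨ρ, rfl⟩ : ∃ ρ, σ = t ++ ρ := ⟨σ.drop t.length, by
      nth_rw 1 [← List.take_append_drop t.length σ]; rw [h]⟩
    have := congrArg (fun y => y ρ) (strip_pre t (strip t x))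
    simpa only [strip_apply] using this
  · refine Finsupp.mapDomain_of_notMem_range _ _ ?_
    rintro ⟨ρ, rfl⟩
    simp at h

/-- modular lemma -/
lemma face_mem {U : Submodule F W} {t t' h : List W} {e : W} (hi : Ind U (t ++ h)) (ht : Face t' t)
    (h1 : e ∈ sp U t) (h2 : e ∈ sp U (t' ++ h)) : e ∈ sp U t' := by
  rw [sp_append] at h2
  exact mem_of_mem_sp (ind_append.1 hi).2 (sp_mono le_rfl ht.1.subset) h1 h2

lemma strip_del {U : Submodule F W} {e : W} {s : ℕ} {t : List W} (hts : t.length = s + 1)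
    (htP : e ∈ sp U t) (htP' : e ∉ sp U (t.take s)) {S : Set (List W)}
    (hS : ∀ σ ∈ S, s + 1 ≤ σ.length ∧ Ind U σ ∧ (e ∈ sp U σ → e ∈ sp U (σ.take (s + 1)))) {z}
    (hz : z ∈ sup S) : strip t (del z) = (-1 : ℤ) ^ (s + 1) • del (strip t z) := by
  have : (strip t).comp del z - (-1 : ℤ) ^ (s + 1) • (del.comp (strip t)) z ∈ (⊥ : AddSubgroup (List W →₀ ℤ)) := by
    have := map_mem_of_sup ((strip t).comp del - (-1 : ℤ) ^ (s + 1) • (del.comp (strip t))) ⊥ ?_ hz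
    · exact this
    intro σ hσ n
    obtain ⟨h1, h2, h3⟩ := hS σ hσ
    obtain ⟨τ, ρ, rfl, hτ⟩ : ∃ τ ρ, σ = τ ++ ρ ∧ τ.length = s + 1 :=
      ⟨σ.take (s+1), σ.drop (s+1), (List.take_append_drop _ _).symm, by simp [h1]⟩
    have h3 : e ∈ sp U (τ ++ ρ) → e ∈ sp U τ := by
      rw [← hτ, List.take_left'] at h3
      exact h3
      rfl
    have hR : strip t (remd τ (Finsupp.single ρ n)) = 0 := by
      have hm : remd τ (Finsupp.single ρ n) ∈ sup {l | ∃ τ', Face τ' τ ∧ l = τ' ++ ρ} := by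
        refine remd_mem (S := {ρ}) ?_ (single_mem_sup (Set.mem_singleton _) _)
        rintro l rfl t' ht'
        exact ⟨t', ht', rfl⟩
      ext l
      rw [strip_apply]
      by_contra hl
      obtain ⟨τ', hτ', h4⟩ := hm _ hl
      have hlen : τ'.length = s := by have := hτ'.2; omega
      have h5 : e ∈ sp U (τ' ++ ρ) := by
        rw [← h4]; exact sp_mono le_rfl (List.subset_append_left _ _) htP
      have h6 : e ∈ sp U τ := h3 (sp_mono le_rfl ((hτ'.1.append (List.Sublist.refl ρ)).subset) h5)
      have h7 := face_mem h2 hτ' h6 h5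
      have h8 : τ' = t.take s := by
        have := congrArg (List.take s) h4
        rw [List.take_append_of_le_length (by omega), List.take_left' hlen] at this
        exact this.symm
      rw [h8] at h7
      exact htP' h7
    rw [AddSubgroup.mem_bot, AddMonoidHom.sub_apply, sub_eq_zero]
    change strip t (del _) = (-1 : ℤ) ^ (s + 1) • del (strip t _)
    rw [← pre_single, del_pre, map_add, hR, add_zero, hτ, map_zsmul]
    congr 1
    by_cases hτt : τ = t
    · subst hτt
      rw [strip_pre, strip_pre]
    · have h0 : ∀ x, strip t (pre τ x) = 0 := by
        intro x
        ext l
        rw [strip_apply]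
        refine Finsupp.mapDomain_of_notMem_range _ _ ?_
        rintro ⟨l', hl'⟩
        exact hτt (List.append_inj_left hl' (by omega))
      rw [h0, h0, map_zero]
  rw [AddSubgroup.mem_bot, sub_eq_zero] at this
  exact this

lemma acyclic [FiniteDimensional F W] (k : ℕ) : ∀ (U : Submodule F W) (E : Set W)
    (_ : Module.finrank F U + k < Module.finrank F ↥(U ⊔ Submodule.span F E))
    (z : List W →₀ ℤ) (_ : z ∈ sup (Wd U E k)) (_ : del z = 0),
    ∃ y ∈ sup (Wd U E (k + 1)), del y = z := by
  induction k using Nat.strong_induction_on with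
  | _ k ih =>
  intro U E hr
  obtain ⟨e, heE, heU⟩ : ∃ e ∈ E, e ∉ U := by
    by_contra! h
    have : U ⊔ Submodule.span F E = U := sup_eq_left.2 (Submodule.span_le.2 h)
    rw [this] at hr
    omega
  have main : ∀ s ≤ k, ∀ z ∈ sup {l | l ∈ Wd U E k ∧ (e ∈ sp U l → e ∈ sp U (l.take s))},
      del z = 0 → ∃ y ∈ sup (Wd U E (k + 1)), del y = z := by
    intro s
    induction s with
    | zero =>
      intro _ z hz hdz
      refine ⟨pre [e] z, pre_mem ?_ hz, by rw [del_pre_one, hdz, map_zero, sub_zero]⟩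
      rintro l ⟨⟨h1, h2, h3⟩, h4⟩
      refine ⟨by simp [h1], ?_, ?_⟩
      · intro v hv
        rcases List.mem_cons.1 hv with rfl | hv
        · exact heE
        · exact h2 v hv
      · refine h3.cons_of_not_mem fun h => heU ?_
        simpa [sp] using h4 h
    | succ s ihs =>
      intro hs z hz hdz
      classical
      have hcyc : ∀ t : List W, t.length = s + 1 → e ∈ sp U t → e ∉ sp U (t.take s) →
          ∃ η ∈ sup {l | t ++ l ∈ Wd U E (k + 1)}, del η = strip t z := by
        intro t h1 h2 h3
        by_cases h0 : strip t z = 0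
        · exact ⟨0, zero_mem _, by rw [h0, map_zero]⟩
        obtain ⟨l0, hl0⟩ := Finsupp.ne_iff.1 h0
        obtain ⟨⟨h4, h5, h6⟩, h7⟩ := hz _ hl0
        have hti : Ind U t := (ind_append.1 h6).1
        have htE : ∀ v ∈ t, v ∈ E := fun v hv => h5 v (List.mem_append_left _ hv)
        have hd := strip_del h1 h2 h3 (fun σ hσ => ⟨by rw [hσ.1.1]; exact hs, hσ.1.2.2, hσ.2⟩) hz
        rw [hdz, map_zero] at hd
        have hd' : del (strip t z) = 0 := by
          rcases neg_one_pow_eq_or ℤ (s+1) with h | h <;> rw [h] at hd <;> simpa using hd.symm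
        obtain ⟨η, hη, hη'⟩ := ih (k - (s+1)) (by omega) (sp U t) E (by
          have : sp U t ⊔ Submodule.span F E = U ⊔ Submodule.span F E := by
            apply le_antisymm
            · exact sup_le (sp_le le_sup_left fun v hv =>
                Submodule.mem_sup_right (Submodule.subset_span (htE v hv))) le_sup_right
            · exact sup_le_sup_right (le_sp _ _) _
          rw [this, finrank_sp hti]
          omega) (strip t z) (by
            intro l hl
            obtain ⟨⟨h4, h5, h6⟩, h7⟩ := hz _ hl
            refine ⟨?_, fun v hv => h5 v (List.mem_append_right _ hv), (ind_append.1 h6).2⟩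
            rw [List.length_append] at h4
            omega) hd'
        refine ⟨η, sup_mono ?_ hη, hη'⟩
        rintro l ⟨h8, h9, h10⟩
        refine ⟨by rw [List.length_append]; omega, ?_, ind_append.2 ⟨hti, h10⟩⟩
        intro v hv
        rcases List.mem_append.1 hv with hv | hv
        · exact htE v hv
        · exact h9 v hv
      choose! η hη hη' using hcyc
      let T : Finset (List W) := (z.support.image (List.take (s+1))).filter
        (fun t => t.length = s + 1 ∧ e ∈ sp U t ∧ e ∉ sp U (t.take s))
      have hT : ∀ t ∈ T, t.length = s + 1 ∧ e ∈ sp U t ∧ e ∉ sp U (t.take s) :=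
        fun t ht => (Finset.mem_filter.1 ht).2
      let y := ∑ t ∈ T, (-1 : ℤ) ^ (s + 1) • pre t (η t)
      have hy : y ∈ sup (Wd U E (k + 1)) := by
        refine AddSubgroup.sum_mem _ fun t ht => AddSubgroup.zsmul_mem _ ?_ _
        obtain ⟨h1, h2, h3⟩ := hT t ht
        exact pre_mem (fun l hl => hl) (hη t h1 h2 h3)
      have hdy : del y = ∑ t ∈ T, pre t (strip t z) + ∑ t ∈ T, (-1 : ℤ) ^ (s + 1) • remd t (η t) := by
        rw [map_sum, ← Finset.sum_add_distrib]
        refine Finset.sum_congr rfl fun t ht => ?_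
        obtain ⟨h1, h2, h3⟩ := hT t ht
        rw [map_zsmul, del_pre, hη' t h1 h2 h3, h1, smul_add, smul_smul, ← mul_pow]
        simp
      have hw : z - del y ∈ sup {l | l ∈ Wd U E k ∧ (e ∈ sp U l → e ∈ sp U (l.take s))} := by
        rw [hdy, ← sub_sub]
        refine sub_mem ?_ (AddSubgroup.sum_mem _ fun t ht => AddSubgroup.zsmul_mem _ ?_ _)
        · intro σ hσ
          have e1 : (z - ∑ t ∈ T, pre t (strip t z)) σ = z σ - ∑ t ∈ T, if σ.take (s+1) = t then z σ else 0 := by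
            rw [Finsupp.sub_apply, Finsupp.finsetSum_apply]
            congr 1
            refine Finset.sum_congr rfl fun t ht => ?_
            rw [pre_strip, (hT t ht).1]
          rw [e1, Finset.sum_ite_eq] at hσ
          have hzσ : z σ ≠ 0 := by
            intro h
            simp [h] at hσ
          obtain ⟨h1, h2⟩ := hz σ hzσ
          refine ⟨h1, fun h3 => ?_⟩
          by_contra h4
          have h5 : σ.take (s+1) ∈ T := by
            refine Finset.mem_filter.2 ⟨Finset.mem_image.2 ⟨σ, by simpa using hzσ, rfl⟩, ?_, h2 h3, ?_⟩
            · rw [List.length_take, h1.1]; omega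
            · rwa [List.take_take, min_eq_left (by omega)]
          rw [if_pos h5] at hσ
          simp at hσ
        · obtain ⟨h1, h2, h3⟩ := hT t ht
          refine remd_mem ?_ (hη t h1 h2 h3)
          rintro l ⟨h4, h5, h6⟩ t' ht'
          have hl' : (t' ++ l).Sublist (t ++ l) := ht'.1.append (List.Sublist.refl l)
          have hlen : t'.length = s := by have := ht'.2; omega
          refine ⟨⟨?_, fun v hv => h5 v (hl'.subset hv), h6.sublist hl'⟩, fun h7 => ?_⟩
          · rw [List.length_append] at *; omega
          · rw [List.take_left' hlen]
            exact face_mem h6 ht' h2 h7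
      obtain ⟨y', hy', hdy'⟩ := ihs (by omega) _ hw (by rw [map_sub, hdz, del_del, sub_zero])
      exact ⟨y' + y, add_mem hy' hy, by rw [map_add, hdy']; abel⟩
  intro z hz hdz
  refine main k le_rfl z (sup_mono ?_ hz) hdz
  intro l hl
  exact ⟨hl, fun h => by rwa [List.take_of_length_le hl.1.le]⟩

end Acyclic
end GLStab

namespace GLStab
set_option linter.unusedSectionVars false
section Groups
variable {F W : Type} [Field F] [AddCommGroup W] [Module F W]

/-- Automorphisms fixing `U` pointwise and acting trivially modulo `K`. -/
def Gp (U K : Submodule F W) : Subgroup (W ≃ₗ[F] W) where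
  carrier := {g | (∀ u ∈ U, g u = u) ∧ ∀ w, g w - w ∈ K}
  one_mem' := ⟨fun u _ => rfl, fun w => by simp⟩
  mul_mem' {a b} ha hb := by
    refine ⟨fun u hu => ?_, fun w => ?_⟩
    · rw [LinearEquiv.mul_apply, hb.1 u hu, ha.1 u hu]
    · have := K.add_mem (ha.2 (b w)) (hb.2 w)
      rwa [sub_add_sub_cancel] at this
  inv_mem' {a} ha := by
    have h : ∀ w, a (a⁻¹ w) = w := fun w => a.apply_symm_apply w
    refine ⟨fun u hu => ?_, fun w => ?_⟩
    · apply a.injective; rw [h, ha.1 u hu]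
    · have := ha.2 (a⁻¹ w)
      rw [h] at this
      rw [← neg_sub]
      exact K.neg_mem this

lemma mem_Gp {U K : Submodule F W} {g : W ≃ₗ[F] W} :
    g ∈ Gp U K ↔ (∀ u ∈ U, g u = u) ∧ ∀ w, g w - w ∈ K := Iff.rfl

lemma Gp_mono {U U' K K' : Submodule F W} (hU : U' ≤ U) (hK : K ≤ K') : Gp U K ≤ Gp U' K' :=
  fun _ hg => ⟨fun u hu => hg.1 u (hU hu), fun w => hK (hg.2 w)⟩

lemma map_eq_iff_fix {g : W ≃ₗ[F] W} {l : List W} : l.map g = l ↔ ∀ v ∈ l, g v = v := by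
  induction l with
  | nil => simp
  | cons v l ih => simp [ih]

/-- stabilizer of a word -/
lemma mem_Gp_sp {U K : Submodule F W} {l : List W} {g : W ≃ₗ[F] W} (hg : g ∈ Gp U K) :
    g ∈ Gp (sp U l) K ↔ l.map g = l := by
  rw [map_eq_iff_fix]
  constructor
  · intro h v hv
    exact h.1 v (mem_sp U hv)
  · intro h
    refine ⟨fun u hu => ?_, hg.2⟩
    have : sp U l ≤ LinearMap.eqLocus (g : W →ₗ[F] W) LinearMap.id :=
      sp_le (fun u hu => hg.1 u hu) h
    exact this hu

lemma Ind.map_equiv (g : W ≃ₗ[F] W) {U U' : Submodule F W} {l : List W} (hl : Ind U l)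
    (h : ∀ w, g w ∈ U' → w ∈ U) : Ind U' (l.map g) := by
  induction l generalizing U U' with
  | nil => trivial
  | cons v l ih =>
    refine ⟨fun hv => hl.1 (h v hv), ih hl.2 fun w hw => ?_⟩
    obtain ⟨a, ha, b, hb, hab⟩ := Submodule.mem_sup.1 hw
    obtain ⟨c, rfl⟩ := Submodule.mem_span_singleton.1 hb
    refine Submodule.mem_sup.2 ⟨w - c • v, h _ ?_, c • v, Submodule.smul_mem _ _
      (Submodule.mem_span_singleton_self v), by abel⟩
    rw [map_sub, map_smul, ← hab]
    simpa using ha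

lemma Ind.add_const {U : Submodule F W} {l : List W} {c : W} (hc : c ∈ U) (hl : Ind U l) :
    Ind U (l.map (· + c)) := by
  induction l generalizing U with
  | nil => trivial
  | cons v l ih =>
    refine ⟨fun hv => hl.1 ?_, ?_⟩
    · have := U.sub_mem hv hc
      simpa using this
    · refine (ih (Submodule.mem_sup_left hc) hl.2).mono (sup_le le_sup_left ?_)
      rw [Submodule.span_singleton_le_iff_mem]
      exact add_mem (Submodule.mem_sup_right (Submodule.mem_span_singleton_self v))
        (Submodule.mem_sup_left hc)

lemma Ind.sup_disj {U V T : Submodule F W} {l : List W} (hl : Ind U l) (hT : sp U l ≤ T)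
    (hV : Disjoint V T) : Ind (U ⊔ V) l := by
  induction l generalizing U with
  | nil => trivial
  | cons v l ih =>
    refine ⟨fun hv => hl.1 ?_, ?_⟩
    · obtain ⟨a, ha, b, hb, hab⟩ := Submodule.mem_sup.1 hv
      have hvT : v ∈ T := hT (mem_sp U (by simp))
      have haT : a ∈ T := hT (le_sp U _ ha)
      have hbT : b ∈ T := by
        have := T.sub_mem hvT haT
        rwa [← hab, add_sub_cancel_left] at this
      have := Submodule.disjoint_def.1 hV b hb hbT
      rw [this, add_zero] at hab
      rwa [← hab]
    · have := ih hl.2 hT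
      rwa [sup_right_comm] at this

variable [FiniteDimensional F W]

lemma exists_word {U : Submodule F W} {E : Set W} (k : ℕ)
    (hr : Module.finrank F U + k ≤ Module.finrank F ↥(U ⊔ Submodule.span F E)) :
    ∃ l, l ∈ Wd U E k := by
  induction k with
  | zero => exact ⟨[], rfl, by simp, trivial⟩
  | succ k ih =>
    obtain ⟨l, h1, h2, h3⟩ := ih (by omega)
    by_contra hcon
    push Not at hcon
    have : U ⊔ Submodule.span F E ≤ sp U l := by
      refine sup_le (le_sp _ _) (Submodule.span_le.2 fun e he => ?_)
      by_contra he'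
      refine hcon (e :: l) ⟨by simp [h1], ?_, h3.cons_of_not_mem he'⟩
      simpa using ⟨he, h2⟩
    have := Submodule.finrank_mono this
    rw [finrank_sp h3] at this
    omega

lemma exists_functional {U : Submodule F W} {v v' : W} (hv : v ∉ U) (hv' : v' ∉ U) :
    ∃ φ : W →ₗ[F] F, (∀ u ∈ U, φ u = 0) ∧ φ v = 1 ∧ φ v' ≠ 0 := by
  obtain ⟨φ, h1, h2⟩ := Submodule.exists_le_ker_of_notMem hv
  obtain ⟨ψ, h3, h4⟩ := Submodule.exists_le_ker_of_notMem hv'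
  have key : ∃ φ : W →ₗ[F] F, (∀ u ∈ U, φ u = 0) ∧ φ v ≠ 0 ∧ φ v' ≠ 0 := by
    by_cases h5 : φ v' = 0
    · by_cases h6 : ψ v = 0
      · refine ⟨φ + ψ, fun u hu => ?_, ?_, ?_⟩
        · have a := h2 hu
          have b := h4 hu
          rw [LinearMap.mem_ker] at a b
          simp [a, b]
        · simpa [h6] using h1
        · simpa [h5] using h3
      · exact ⟨ψ, fun u hu => h4 hu, h6, h3⟩
    · exact ⟨φ, fun u hu => h2 hu, h1, h5⟩
  obtain ⟨φ, h1, h2, h3⟩ := key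
  refine ⟨(φ v)⁻¹ • φ, fun u hu => by simp [h1 u hu], by simp [h2], by simp [h2, h3]⟩

lemma trans_one {U K : Submodule F W} {v v' : W} (hv : v ∉ U) (hv' : v' ∉ U) (h : v' - v ∈ K) :
    ∃ g ∈ Gp U K, g v = v' := by
  obtain ⟨φ, h1, h2, h3⟩ := exists_functional hv hv'
  let f : W →ₗ[F] W := LinearMap.id + φ.smulRight (v' - v)
  have hf : ∀ w, f w = w + φ w • (v' - v) := fun w => rfl
  have inj : Function.Injective f := by
    rw [← LinearMap.ker_eq_bot, LinearMap.ker_eq_bot']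
    intro w hw
    rw [hf] at hw
    have := congrArg φ hw
    rw [map_add, map_smul, map_sub, h2, map_zero, smul_eq_mul] at this
    have h4 : φ w * φ v' = 0 := by linear_combination this
    rcases mul_eq_zero.1 h4 with h5 | h5
    · rw [h5] at hw; simpa using hw
    · exact absurd h5 h3
  have he : ∀ w, LinearEquiv.ofInjectiveEndo f inj w = f w := fun w => rfl
  refine ⟨LinearEquiv.ofInjectiveEndo f inj, ⟨fun u hu => ?_, fun w => ?_⟩, ?_⟩
  · rw [he, hf, h1 u hu]; simp
  · rw [he, hf, add_sub_cancel_left]; exact K.smul_mem _ h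
  · rw [he, hf, h2]; simp

lemma trans_words {K : Submodule F W} {t : W} {x y : List W} : ∀ {U : Submodule F W},
    x.length = y.length → Ind U x → Ind U y → (∀ v ∈ x, v - t ∈ K) → (∀ v ∈ y, v - t ∈ K) →
    ∃ g ∈ Gp U K, x.map g = y := by
  induction y generalizing x with
  | nil =>
    intro U hl _ _ _ _
    exact ⟨1, one_mem _, by simpa using hl⟩
  | cons v' l' ih =>
    intro U hl hx hy hxt hyt
    cases x with
    | nil => simp at hl
    | cons v l =>
      have h0 : v' - v ∈ K := by
        have := K.sub_mem (hyt v' (by simp)) (hxt v (by simp))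
        simpa using this
      obtain ⟨g₁, h1, h2⟩ := trans_one hx.1 hy.1 h0
      have hA : Ind (U ⊔ Submodule.span F {v'}) (l.map g₁) := by
        refine hx.2.map_equiv g₁ fun w hw => ?_
        obtain ⟨a, ha, b, hb, hab⟩ := Submodule.mem_sup.1 hw
        obtain ⟨c, rfl⟩ := Submodule.mem_span_singleton.1 hb
        have : w = a + c • v := by
          apply g₁.injective
          rw [map_add, map_smul, h2, h1.1 a ha, hab]
        rw [this]
        exact add_mem (Submodule.mem_sup_left ha) (Submodule.mem_sup_right
          (Submodule.smul_mem _ _ (Submodule.mem_span_singleton_self v)))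
      have hB : ∀ w ∈ l.map g₁, w - t ∈ K := by
        intro w hw
        obtain ⟨w', hw', rfl⟩ := List.mem_map.1 hw
        have := K.add_mem (h1.2 w') (hxt w' (by simp [hw']))
        rwa [sub_add_sub_cancel] at this
      obtain ⟨g₂, h3, h4⟩ := ih (x := l.map g₁) (U := U ⊔ Submodule.span F {v'}) (by simpa using hl)
        hA hy.2 hB (fun w hw => hyt w (by simp [hw]))
      refine ⟨g₂ * g₁, mul_mem (Gp_mono le_sup_left le_rfl h3) h1, ?_⟩
      rw [List.map_cons, LinearEquiv.mul_apply, h2,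
        h3.1 v' (Submodule.mem_sup_right (Submodule.mem_span_singleton_self v')), ← h4,
        List.map_map]
      rfl

/-- Data for a split pair. -/
structure Dat (U K V T : Submodule F W) : Prop where
  hU : U ≤ T
  hV : V ≤ K
  compl : IsCompl V T
  hK : K ⊓ T ≤ U

lemma exists_dat (U K : Submodule F W) : ∃ V T, Dat U K V T := by
  obtain ⟨D, hD⟩ := exists_isCompl (U ⊓ K)
  have h1 : Disjoint U (D ⊓ K) := by
    rw [Submodule.disjoint_def]
    intro x hx hx'
    exact Submodule.disjoint_def.1 hD.1 x ⟨hx, hx'.2⟩ hx'.1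
  obtain ⟨T, hT, hT'⟩ := h1.exists_isCompl
  refine ⟨D ⊓ K, T, hT, inf_le_right, hT'.symm, ?_⟩
  rintro k ⟨hk, hkT⟩
  have hk' : k ∈ (U ⊓ K) ⊔ D := by rw [hD.sup_eq_top]; trivial
  obtain ⟨a, ha, b, hb, rfl⟩ := Submodule.mem_sup.1 hk'
  have hbK : b ∈ K := by
    have := K.sub_mem hk ha.2
    rwa [add_sub_cancel_left] at this
  have hbT : b ∈ T := by
    have := T.sub_mem hkT (hT ha.1)
    rwa [add_sub_cancel_left] at this
  have := Submodule.disjoint_def.1 hT'.1 b hbT ⟨hb, hbK⟩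
  rw [this, add_zero]; exact ha.1

lemma Dat.finrank_eq {U K V T : Submodule F W} (h : Dat U K V T) :
    Module.finrank F V + Module.finrank F U = Module.finrank F ↥(U ⊔ K) := by
  have h1 : V ⊔ U = U ⊔ K := by
    apply le_antisymm
    · exact sup_le (h.hV.trans le_sup_right) le_sup_left
    · refine sup_le le_sup_right fun k hk => ?_
      have hk' : k ∈ V ⊔ T := by rw [h.compl.sup_eq_top]; trivial
      obtain ⟨a, ha, b, hb, rfl⟩ := Submodule.mem_sup.1 hk'
      refine add_mem (Submodule.mem_sup_left ha) (Submodule.mem_sup_right (h.hK ⟨?_, hb⟩))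
      have := K.sub_mem hk (h.hV ha)
      rwa [add_sub_cancel_left] at this
  have h2 : V ⊓ U = ⊥ := (h.compl.disjoint.mono_right h.hU).eq_bot
  have := Submodule.finrank_sup_add_finrank_inf_eq V U
  rw [h1, h2, finrank_bot] at this
  omega

end Groups
end GLStab

namespace GLStab
set_option linter.unusedSectionVars false
section WordModules
variable {F W : Type} [Field F] [AddCommGroup W] [Module F W]

lemma good_congr {A B : Cx} {f g : CMap A B} (h : ∀ n x, f.f n x = g.f n x) {m : ℕ}
    (hg : Good g m) : Good f m :=
  Homo.good (fun n a _ => ⟨0, by rw [h, map_zero, add_zero]⟩) hg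

lemma chm_comp {G M H N K P : Type} [Group G] [AddCommGroup M] [Group H] [AddCommGroup N]
    [Group K] [AddCommGroup P] (f : G →* H) (φ : M →+ N) (g : H →* K) (ψ : N →+ P) (n : ℕ)
    (x : (Fin n → G) →₀ M) : chm g ψ n (chm f φ n x) = chm (g.comp f) (ψ.comp φ) n x := by
  refine bar_ext (f := (chm g ψ n).comp (chm f φ n)) (g := chm (g.comp f) (ψ.comp φ) n) ?_ x
  intro v m
  rw [AddMonoidHom.comp_apply, chm_single, chm_single, chm_single]
  rfl

lemma chm_add {G M H N : Type} [Group G] [AddCommGroup M] [Group H] [AddCommGroup N]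
    (f : G →* H) (φ ψ : M →+ N) (n : ℕ) (x : (Fin n → G) →₀ M) :
    chm f (φ + ψ) n x = chm f φ n x + chm f ψ n x := by
  refine bar_ext (f := chm f (φ + ψ) n) (g := chm f φ n + chm f ψ n) ?_ x
  intro v m
  rw [AddMonoidHom.add_apply, chm_single, chm_single, chm_single]
  simp

lemma chm_sub {G M H N : Type} [Group G] [AddCommGroup M] [Group H] [AddCommGroup N]
    (f : G →* H) (φ ψ : M →+ N) (n : ℕ) (x : (Fin n → G) →₀ M) :
    chm f (φ - ψ) n x = chm f φ n x - chm f ψ n x := by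
  rw [eq_sub_iff_add_eq, ← chm_add, sub_add_cancel]

lemma chm_bij {G M N : Type} [Group G] [AddCommGroup M] [AddCommGroup N]
    (φ : M →+ N) (h : Function.Bijective φ) (n : ℕ) :
    Function.Bijective (chm (MonoidHom.id G) φ n) := by
  constructor
  · intro x y hxy
    rw [chm_id, chm_id] at hxy
    exact Finsupp.mapRange_injective _ _ h.1 hxy
  · intro y
    obtain ⟨x, hx⟩ := Finsupp.mapRange_surjective φ (map_zero φ) h.2 y
    exact ⟨x, by rw [chm_id, hx]⟩

lemma good_barMap_comp {G M H N K P : Type} [Group G] [AddCommGroup M] [Group H] [AddCommGroup N]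
    [Group K] [AddCommGroup P] {ρ : G →* AddMonoid.End M} {σ : H →* AddMonoid.End N}
    {τ : K →* AddMonoid.End P} {f : G →* H} {φ : M →+ N} {g : H →* K} {ψ : N →+ P}
    {k : G →* K} {χ : M →+ P} {h : ∀ g m, φ (ρ g m) = σ (f g) (φ m)}
    {h' : ∀ g' m, ψ (σ g' m) = τ (g g') (ψ m)}
    {h'' : ∀ g m, χ (ρ g m) = τ (k g) (χ m)} (hk : ∀ a, k a = g (f a)) (hχ : ∀ m, χ m = ψ (φ m))
    {m : ℕ} (hg : Good (barMap (ρ := σ) (σ := τ) g ψ h') m)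
    (hf : Good (barMap (ρ := ρ) (σ := σ) f φ h) m) :
    Good (barMap (ρ := ρ) (σ := τ) k χ h'') m := by
  obtain rfl : k = g.comp f := MonoidHom.ext hk
  obtain rfl : χ = ψ.comp φ := AddMonoidHom.ext hχ
  refine good_congr ?_ (hg.comp hf)
  intro n x
  exact (chm_comp f φ g ψ n x).symm

/-- Trivial coefficients. -/
noncomputable abbrev tm {G H : Type} [Group G] [Group H] (f : G →* H) :
    CMap (bar (1 : G →* AddMonoid.End ℤ)) (bar (1 : H →* AddMonoid.End ℤ)) :=
  barMap f (AddMonoidHom.id ℤ) (fun _ _ => rfl)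

/-- The inclusion of `A` in `B` is good in a range. -/
def GoodSub {H : Type} [Group H] (A B : Subgroup H) (m : ℕ) : Prop :=
  ∃ h : A ≤ B, Good (tm (Subgroup.inclusion h)) m

lemma GoodSub.trans {H : Type} [Group H] {A B C : Subgroup H} {m : ℕ} (h : GoodSub A B m)
    (h' : GoodSub B C m) : GoodSub A C m := by
  obtain ⟨h1, h2⟩ := h
  obtain ⟨h3, h4⟩ := h'
  exact ⟨h1.trans h3, good_barMap_comp (fun _ => rfl) (fun _ => rfl) h4 h2⟩

lemma GoodSub.refl {H : Type} [Group H] (A : Subgroup H) (m : ℕ) : GoodSub A A m :=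
  ⟨le_rfl, good_of_bij _ (fun n => chm_bij _ Function.bijective_id n) m⟩

lemma GoodSub.zero {H : Type} [Group H] {A B : Subgroup H} (h : A ≤ B) : GoodSub A B 0 := by
  refine ⟨h, (good_iff _ _).2 fun n hn => ?_⟩
  obtain rfl : n = 0 := by omega
  rw [rel_zero]
  intro b _
  refine ⟨Finsupp.single (fun i => i.elim0) (b (fun i => i.elim0)), trivial, 0, ?_⟩
  rw [map_zero, add_zero]
  change b = chm (Subgroup.inclusion h) (AddMonoidHom.id ℤ) 0 _
  rw [chm_single]
  refine Finsupp.ext fun v => ?_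
  rw [Subsingleton.elim v (fun i => i.elim0),
    Subsingleton.elim (_ ∘ _) (fun i : Fin 0 => (i.elim0 : B))]
  simp

/-- Action on words. -/
noncomputable def lact : (W ≃ₗ[F] W) →* AddMonoid.End (List W →₀ ℤ) where
  toFun g := lmap g
  map_one' := by
    apply Finsupp.addHom_ext
    intro l n
    rw [lmap_single]
    change _ = Finsupp.single l n
    congr 1
    exact List.map_id l
  map_mul' a b := by
    apply Finsupp.addHom_ext
    intro l n
    change _ = lmap a (lmap b _)
    rw [lmap_single, lmap_single, lmap_single, List.map_map]
    rfl

/-- Stability. -/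
def Stb (G : Subgroup (W ≃ₗ[F] W)) (M : AddSubgroup (List W →₀ ℤ)) : Prop :=
  ∀ g ∈ G, ∀ x ∈ M, lmap g x ∈ M

/-- The action on a stable submodule. -/
noncomputable def mact {G : Subgroup (W ≃ₗ[F] W)} {M : AddSubgroup (List W →₀ ℤ)} (h : Stb G M) :
    G →* AddMonoid.End M :=
  subAct (lact.comp G.subtype) M (fun g m hm => h g g.2 m hm)

lemma mact_coe {G : Subgroup (W ≃ₗ[F] W)} {M : AddSubgroup (List W →₀ ℤ)} (h : Stb G M) (g : G)
    (x : M) : ((mact h g x : M) : List W →₀ ℤ) = lmap g.1 x := rfl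

/-- Restriction of an additive map. -/
def res {A B : Type} [AddCommGroup A] [AddCommGroup B] (φ : A →+ B) {M : AddSubgroup A}
    {M' : AddSubgroup B} (h : ∀ x ∈ M, φ x ∈ M') : M →+ M' :=
  (φ.comp M.subtype).codRestrict M' (fun x => h x x.2)

lemma res_coe {A B : Type} [AddCommGroup A] [AddCommGroup B] (φ : A →+ B) {M : AddSubgroup A}
    {M' : AddSubgroup B} (h : ∀ x ∈ M, φ x ∈ M') (x : M) : (res φ h x : B) = φ x := rfl

/-- Map between word modules. -/
noncomputable abbrev mmap {G H : Subgroup (W ≃ₗ[F] W)} {M M' : AddSubgroup (List W →₀ ℤ)}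
    (hM : Stb G M) (hM' : Stb H M') (hGH : G ≤ H) (φ : (List W →₀ ℤ) →+ (List W →₀ ℤ))
    (h : ∀ x ∈ M, φ x ∈ M') (he : ∀ g ∈ G, ∀ x ∈ M, φ (lmap g x) = lmap g (φ x)) :
    CMap (bar (mact hM)) (bar (mact hM')) :=
  barMap (Subgroup.inclusion hGH) (res φ h) (fun g m => Subtype.ext (he g.1 g.2 m.1 m.2))

/-- Inclusion of a point. -/
noncomputable def pt {S : Set (List W)} {x : List W} (hx : x ∈ S) : ℤ →+ sup S :=
  (Finsupp.singleAddHom x).codRestrict (sup S) (fun n => single_mem_sup hx n)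

lemma pt_coe {S : Set (List W)} {x : List W} (hx : x ∈ S) (n : ℤ) :
    (pt hx n : List W →₀ ℤ) = Finsupp.single x n := rfl

lemma pt_equi {L G : Subgroup (W ≃ₗ[F] W)} (hLG : L ≤ G) {S : Set (List W)} (hS : Stb G (sup S))
    {x : List W} (hx : x ∈ S) (hfix : ∀ g ∈ L, x.map g = x) (g : L) (n : ℤ) :
    pt hx ((1 : L →* AddMonoid.End ℤ) g n) = mact hS (Subgroup.inclusion hLG g) (pt hx n) := by
  apply Subtype.ext
  rw [mact_coe, pt_coe, pt_coe, lmap_single]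
  change Finsupp.single x n = Finsupp.single (x.map g.1) n
  rw [hfix g.1 g.2]

/-- Map induced by the inclusion of a point. -/
noncomputable abbrev pmap {L G : Subgroup (W ≃ₗ[F] W)} (hLG : L ≤ G) {S : Set (List W)}
    (hS : Stb G (sup S)) {x : List W} (hx : x ∈ S) (hfix : ∀ g ∈ L, x.map g = x) :
    CMap (bar (1 : L →* AddMonoid.End ℤ)) (bar (mact hS)) :=
  barMap (Subgroup.inclusion hLG) (pt hx) (pt_equi hLG hS hx hfix)

lemma stb_sup {G : Subgroup (W ≃ₗ[F] W)} {S : Set (List W)}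
    (h : ∀ g ∈ G, ∀ l ∈ S, l.map g ∈ S) : Stb G (sup S) :=
  fun g hg _ hx => lmap_mem (h g hg) hx

lemma shapiro_words {H G : Subgroup (W ≃ₗ[F] W)} (hHG : H ≤ G) {S : Set (List W)}
    (h : ∀ g ∈ G, ∀ l ∈ S, l.map g ∈ S) {x : List W} (hx : x ∈ S)
    (hfix : ∀ g ∈ H, x.map g = x) (hfix' : ∀ g ∈ G, x.map g = x → g ∈ H)
    (ht : ∀ y ∈ S, ∃ g ∈ G, x.map g = y) (m : ℕ) :
    Good (pmap hHG (stb_sup h) hx hfix) m := by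
  have hmul : ∀ (a b : W ≃ₗ[F] W) (l : List W), l.map (a * b : W ≃ₗ[F] W) = (l.map b).map a := by
    intro a b l; rw [List.map_map]; rfl
  have hone : ∀ (l : List W), l.map (1 : W ≃ₗ[F] W) = l := fun l => List.map_id l
  let α : G →* Equiv.Perm S :=
    { toFun := fun g =>
        { toFun := fun l => ⟨l.1.map g.1, h g.1 g.2 l.1 l.2⟩
          invFun := fun l => ⟨l.1.map (g⁻¹).1, h _ (g⁻¹).2 l.1 l.2⟩
          left_inv := fun l => Subtype.ext (by
            change (l.1.map g.1).map (g⁻¹).1 = l.1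
            rw [← hmul, ← Subgroup.coe_mul, inv_mul_cancel]; exact hone _)
          right_inv := fun l => Subtype.ext (by
            change (l.1.map (g⁻¹).1).map g.1 = l.1
            rw [← hmul, ← Subgroup.coe_mul, mul_inv_cancel]; exact hone _) }
      map_one' := Equiv.ext fun l => Subtype.ext (hone _)
      map_mul' := fun a b => Equiv.ext fun l => Subtype.ext (hmul _ _ _) }
  have hα : ∀ g l, (α g l).1 = l.1.map g.1 := fun _ _ => rfl
  let φ : (S →₀ ℤ) →+ sup S :=
    (Finsupp.mapDomain.addMonoidHom (Subtype.val : S → List W)).codRestrict (sup S) (by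
      intro z l hl
      by_contra hlS
      apply hl
      refine Finsupp.mapDomain_of_notMem_range _ _ ?_
      rintro ⟨l', rfl⟩
      exact hlS l'.2)
  have hφ : ∀ z, (φ z : List W →₀ ℤ) = Finsupp.mapDomain Subtype.val z := fun _ => rfl
  have hφs : ∀ s n, φ (Finsupp.single s n) = pt s.2 n := fun s n => Subtype.ext (by
    rw [hφ, Finsupp.mapDomain_single, pt_coe])
  have hbij : Function.Bijective φ := by
    constructor
    · intro a b hab
      apply Finsupp.mapDomain_injective (Subtype.val_injective (p := fun l => l ∈ S))
      exact congrArg Subtype.val hab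
    · rintro ⟨y, hy⟩
      refine ⟨Finsupp.comapDomain Subtype.val y Subtype.val_injective.injOn, Subtype.ext ?_⟩
      rw [hφ]
      refine Finsupp.mapDomain_comapDomain _ Subtype.val_injective _ ?_
      intro l hl
      exact ⟨⟨l, hy l (by simpa using hl)⟩, rfl⟩
  have heq : ∀ g z, φ (fs α (1 : G →* AddMonoid.End ℤ) g z) = mact (stb_sup h) g (φ z) := by
    intro g z
    induction z using Finsupp.induction_linear with
    | zero => simp
    | add x y hx hy => simp only [map_add, hx, hy]
    | single l n =>
      rw [fs_single, hφs, hφs]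
      apply Subtype.ext
      rw [mact_coe, pt_coe, pt_coe, lmap_single]
      rfl
  have h1 := shapiro m (Subgroup.inclusion hHG) (Subgroup.inclusion_injective hHG) α ⟨x, hx⟩
    (fun y => by
      obtain ⟨g, hg, hgy⟩ := ht y.1 y.2
      exact ⟨⟨g, hg⟩, Subtype.ext hgy⟩)
    (fun s => Subtype.ext (hfix s.1 s.2))
    (fun g hg => ⟨⟨g.1, hfix' g.1 g.2 (congrArg Subtype.val hg)⟩, rfl⟩)
    (1 : G →* AddMonoid.End ℤ)
  have h2 : Good (barMap (ρ := fs α (1 : G →* AddMonoid.End ℤ)) (σ := mact (stb_sup h))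
    (MonoidHom.id G) φ heq) m := good_of_bij _ (fun n => chm_bij φ hbij n) m
  exact good_barMap_comp (ρ := (1 : H →* AddMonoid.End ℤ)) (fun _ => rfl)
    (fun n => (hφs ⟨x, hx⟩ n).symm) h2 h1

lemma pmap_good {L H G : Subgroup (W ≃ₗ[F] W)} (hHG : H ≤ G) {S : Set (List W)}
    (h : ∀ g ∈ G, ∀ l ∈ S, l.map g ∈ S) {x : List W} (hx : x ∈ S)
    (hfix : ∀ g ∈ G, g ∈ H ↔ x.map g = x)
    (ht : ∀ y ∈ S, ∃ g ∈ G, x.map g = y) (m : ℕ) (hL : GoodSub L H m) (hLG : L ≤ G)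
    (hLf : ∀ g ∈ L, x.map g = x) :
    Good (pmap hLG (stb_sup h) hx hLf) m := by
  obtain ⟨h1, h2⟩ := hL
  have h3 := shapiro_words hHG h hx (fun g hg => (hfix g (hHG hg)).1 hg)
    (fun g hg => (hfix g hg).2) ht m
  exact good_barMap_comp (fun _ => rfl) (fun _ => rfl) h3 h2

/-- Points related by an element commuting with `L` give homotopic maps. -/
lemma pmap_homo {L G : Subgroup (W ≃ₗ[F] W)} (hLG : L ≤ G) {S : Set (List W)}
    (hS : Stb G (sup S)) {x y : List W} (hx : x ∈ S) (hy : y ∈ S) {g : W ≃ₗ[F] W} (hg : g ∈ G)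
    (hxy : x.map g = y) (hc : ∀ l ∈ L, g * l = l * g) (hfx : ∀ g ∈ L, x.map g = x) (n : ℕ)
    (a : (Fin n → L) →₀ ℤ) (ha : (bar (1 : L →* AddMonoid.End ℤ)).cyc n a) :
    ∃ c, chm (Subgroup.inclusion hLG) (pt hy) n a =
      chm (Subgroup.inclusion hLG) (pt hx) n a + bd (mact hS) n c := by
  have h1 := (pmap hLG hS hx hfx).cyc ha
  obtain ⟨c, hc'⟩ := conj_homo n (mact hS) ⟨g, hg⟩ _ h1
  refine ⟨c, ?_⟩
  rw [← hc', show (pmap hLG hS hx hfx).f n a = chm _ _ n a from rfl, chm_comp]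
  congr 1
  congr 1
  · ext l
    change (l : W ≃ₗ[F] W) _ = (g * l * g⁻¹) _
    rw [hc l l.2, mul_inv_cancel_right]
  · apply AddMonoidHom.ext
    intro k
    change pt hy k = mact hS ⟨g, hg⟩ (pt hx k)
    apply Subtype.ext
    rw [mact_coe, pt_coe, pt_coe, lmap_single, hxy]

end WordModules
end GLStab

namespace GLStab
set_option linter.unusedSectionVars false
section TC
variable {F W : Type} [Field F] [AddCommGroup W] [Module F W]

/-- A translate of `K`. -/
def Es (t : W) (K : Submodule F W) : Set W := {v | v - t ∈ K}

lemma mem_Es {t v : W} {K : Submodule F W} : v ∈ Es t K ↔ v - t ∈ K := Iff.rfl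

lemma Es_sub {t v w : W} {K : Submodule F W} (hv : v ∈ Es t K) (hw : w ∈ Es t K) : v - w ∈ K := by
  have := K.sub_mem hv hw
  rwa [sub_sub_sub_cancel_right] at this

lemma Gp_words {U K : Submodule F W} {t : W} {k : ℕ} :
    ∀ g ∈ Gp U K, ∀ l ∈ Wd U (Es t K) k, l.map g ∈ Wd U (Es t K) k := by
  rintro g hg l ⟨h1, h2, h3⟩
  refine ⟨by simpa using h1, fun v hv => ?_, h3.map_equiv g fun w hw => ?_⟩
  · obtain ⟨w, hw, rfl⟩ := List.mem_map.1 hv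
    have := K.add_mem (hg.2 w) (h2 w hw)
    rwa [sub_add_sub_cancel] at this
  · have : g w = w := by
      have h4 := (inv_mem hg).1 _ hw
      have h5 : g⁻¹ (g w) = w := g.symm_apply_apply w
      rw [h5] at h4
      exact h4.symm
    rwa [this] at hw

lemma Wd_trans [FiniteDimensional F W] {U K : Submodule F W} {t : W} {k : ℕ} {x y : List W}
    (hx : x ∈ Wd U (Es t K) k) (hy : y ∈ Wd U (Es t K) k) : ∃ g ∈ Gp U K, x.map g = y :=
  trans_words (hx.1.trans hy.1.symm) hx.2.2 hy.2.2 hx.2.1 hy.2.1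

lemma stW (U K : Submodule F W) (t : W) (k : ℕ) : Stb (Gp U K) (sup (Wd U (Es t K) k)) :=
  stb_sup Gp_words

lemma Gp_comm {V T : Submodule F W} {g l : W ≃ₗ[F] W} (hg : g ∈ Gp V T) (hl : l ∈ Gp T V) :
    g * l = l * g := by
  ext w
  rw [LinearEquiv.mul_apply, LinearEquiv.mul_apply]
  have h1 : g (l w) = g w + (l w - w) := by
    rw [← hg.1 _ (hl.2 w), ← map_add, add_sub_cancel]
  have h2 : l (g w) = l w + (g w - w) := by
    rw [← hl.1 _ (hg.2 w), ← map_add, add_sub_cancel]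
  rw [h1, h2]; abel

/-- The suspension map. -/
noncomputable def sg (e0 e1 e2 c : W) : (List W →₀ ℤ) →+ (List W →₀ ℤ) :=
  (pre [e0, e1] - pre [e0, e2] + pre [e1, e2]).comp (lmap (· + c))

lemma sg_apply (e0 e1 e2 c : W) (x : List W →₀ ℤ) : sg e0 e1 e2 c x =
    pre [e0, e1] (lmap (· + c) x) - pre [e0, e2] (lmap (· + c) x) +
      pre [e1, e2] (lmap (· + c) x) := rfl

lemma del_pre_two (a b : W) (x : List W →₀ ℤ) :
    del (pre [a, b] x) = pre [b] x - pre [a] x + pre [a, b] (del x) := by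
  rw [pre_cons, del_pre_one, del_pre_one, map_sub, pre_cons a [b]]; abel

lemma sg_del (e0 e1 e2 c : W) (x : List W →₀ ℤ) :
    del (sg e0 e1 e2 c x) = sg e0 e1 e2 c (del x) := by
  rw [sg_apply, sg_apply, map_add, map_sub, del_pre_two, del_pre_two, del_pre_two, lmap_del]
  abel

lemma sg_equi {e0 e1 e2 c : W} {g : W ≃ₗ[F] W} (h0 : g e0 = e0) (h1 : g e1 = e1) (h2 : g e2 = e2)
    (hc : g c = c) (x : List W →₀ ℤ) :
    sg e0 e1 e2 c (lmap g x) = lmap g (sg e0 e1 e2 c x) := by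
  have h : lmap (· + c) (lmap g x) = lmap g (lmap (· + c) x) := by
    induction x using Finsupp.induction_linear with
    | zero => simp
    | add x y hx hy => simp only [map_add, hx, hy]
    | single l n =>
      rw [lmap_single, lmap_single, lmap_single, lmap_single, List.map_map, List.map_map]
      congr 1
      apply List.map_congr_left
      intro v _
      simp [hc]
  rw [sg_apply, sg_apply, h, map_add, map_sub, lmap_pre, lmap_pre, lmap_pre]
  simp [h0, h1, h2]

lemma sup_span_Es (U K : Submodule F W) {t e : W} (he : e ∈ Es t K) (heU : e ∈ U) :
    U ⊔ Submodule.span F (Es t K) = U ⊔ K := by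
  apply le_antisymm
  · refine sup_le le_sup_left (Submodule.span_le.2 fun v hv => ?_)
    have := add_mem (Submodule.mem_sup_left (T := K) heU)
      (Submodule.mem_sup_right (S := U) (Es_sub hv he))
    rwa [add_sub_cancel] at this
  · refine sup_le le_sup_left fun k hk => Submodule.mem_sup_right ?_
    have h1 : t + k ∈ Es t K := by rw [mem_Es]; simpa using hk
    have h2 : t ∈ Es t K := by rw [mem_Es]; simp
    have := Submodule.sub_mem _ (Submodule.subset_span (R := F) h1) (Submodule.subset_span h2)
    simpa using this

/-- The data used in the comparison argument. -/
structure Ctx (U K V' T' : Submodule F W) (t e0 e1 e2 c : W) (s : ℕ) : Prop where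
  hr : Module.finrank F U + (s + 2) = Module.finrank F ↥(U ⊔ Submodule.span F (Es t K))
  m0 : e0 ∈ Es t K
  m1 : e1 ∈ Es t K
  m2 : e2 ∈ Es t K
  mc : c ∈ Es t K
  h01 : Ind U [e0, e1]
  h02 : Ind U [e0, e2]
  h12 : Ind U [e1, e2]
  p02 : sp U [e0, e2] = sp U [e0, e1]
  p12 : sp U [e1, e2] = sp U [e0, e1]
  hc : c ∈ sp U [e0, e1]
  dat : Dat (sp U [e0, e1]) K V' T'

variable {U K V' T' : Submodule F W} {t e0 e1 e2 c : W} {s : ℕ}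

lemma Ctx.m0' (h : Ctx U K V' T' t e0 e1 e2 c s) : e0 ∈ sp U [e0, e1] := mem_sp _ (by simp)
lemma Ctx.m1' (h : Ctx U K V' T' t e0 e1 e2 c s) : e1 ∈ sp U [e0, e1] := mem_sp _ (by simp)
lemma Ctx.m2' (h : Ctx U K V' T' t e0 e1 e2 c s) : e2 ∈ sp U [e0, e1] := by
  rw [← h.p02]; exact mem_sp _ (by simp)

lemma Ctx.le (h : Ctx U K V' T' t e0 e1 e2 c s) : Gp T' V' ≤ Gp U K :=
  Gp_mono ((le_sp _ _).trans h.dat.hU) h.dat.hV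

lemma Ctx.equi (h : Ctx U K V' T' t e0 e1 e2 c s) (g : W ≃ₗ[F] W) (hg : g ∈ Gp T' V')
    (x : List W →₀ ℤ) : sg e0 e1 e2 c (lmap g x) = lmap g (sg e0 e1 e2 c x) :=
  sg_equi (hg.1 _ (h.dat.hU h.m0')) (hg.1 _ (h.dat.hU h.m1')) (hg.1 _ (h.dat.hU h.m2'))
    (hg.1 _ (h.dat.hU h.hc)) x

/-- suspended words are words -/
lemma Ctx.words (h : Ctx U K V' T' t e0 e1 e2 c s) {i : ℕ} {l : List W}
    (hl : l ∈ Wd T' (Es 0 V') i) {a b : W} (ha : a ∈ Es t K) (hb : b ∈ Es t K) (hab : Ind U [a, b])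
    (hP : sp U [a, b] = sp U [e0, e1]) : [a, b] ++ l.map (· + c) ∈ Wd U (Es t K) (i + 2) := by
  obtain ⟨h1, h2, h3⟩ := hl
  refine ⟨by simp [h1], fun v hv => ?_, ind_append.2 ⟨hab, ?_⟩⟩
  · rcases List.mem_append.1 hv with hv | hv
    · simp only [List.mem_cons, List.not_mem_nil, or_false] at hv
      rcases hv with rfl | rfl
      · exact ha
      · exact hb
    · obtain ⟨w, hw, rfl⟩ := List.mem_map.1 hv
      have h4 := h2 w hw
      rw [mem_Es, sub_zero] at h4
      rw [mem_Es, add_sub_assoc]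
      exact K.add_mem (h.dat.hV h4) h.mc
  · rw [hP]
    exact (h3.add_const (h.dat.hU h.hc)).mono h.dat.hU

lemma Ctx.sg_mem (h : Ctx U K V' T' t e0 e1 e2 c s) {i : ℕ} :
    ∀ x ∈ sup (Wd T' (Es 0 V') i), sg e0 e1 e2 c x ∈ sup (Wd U (Es t K) (i + 2)) := by
  intro x hx
  rw [sg_apply]
  have key : ∀ {a b : W}, a ∈ Es t K → b ∈ Es t K → Ind U [a, b] →
      sp U [a, b] = sp U [e0, e1] → pre [a, b] (lmap (· + c) x) ∈ sup (Wd U (Es t K) (i + 2)) := by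
    intro a b ha hb hab hP
    refine pre_mem (S := {l | ∃ l' ∈ Wd T' (Es 0 V') i, l = l'.map (· + c)}) ?_ (lmap_mem ?_ hx)
    · rintro l ⟨l', hl', rfl⟩
      exact h.words hl' ha hb hab hP
    · intro l hl
      exact ⟨l, hl, rfl⟩
  exact add_mem (sub_mem (key h.m0 h.m1 h.h01 rfl) (key h.m0 h.m2 h.h02 h.p02))
    (key h.m1 h.m2 h.h12 h.p12)

variable [FiniteDimensional F W]

lemma Ctx.dimV (h : Ctx U K V' T' t e0 e1 e2 c s) : Module.finrank F V' = s := by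
  have h1 := h.dat.finrank_eq
  have h2 := h.hr
  have h3 : U ⊔ Submodule.span F (Es t K) = sp U [e0, e1] ⊔ K := by
    rw [← sup_span_Es (sp U [e0, e1]) K h.m0 h.m0', sp_eq]
    rw [sup_assoc]
    congr 1
    refine (sup_eq_right.2 (Submodule.span_le.2 ?_)).symm
    intro v hv
    simp only [Set.mem_ofPred_eq, List.mem_cons, List.not_mem_nil, or_false] at hv
    rcases hv with rfl | rfl
    · exact Submodule.subset_span h.m0
    · exact Submodule.subset_span h.m1
  rw [h3, ← h1, finrank_sp h.h01] at h2
  simp only [List.length_cons, List.length_nil] at h2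
  omega

lemma Ctx.sup_top (h : Ctx U K V' T' t e0 e1 e2 c s) :
    T' ⊔ Submodule.span F (Es 0 V') = ⊤ := by
  rw [sup_span_Es T' V' (t := 0) (e := 0) (by rw [mem_Es]; simp) (zero_mem _), sup_comm]
  exact h.dat.compl.sup_eq_top

lemma Ctx.hr' (h : Ctx U K V' T' t e0 e1 e2 c s) :
    Module.finrank F T' + s = Module.finrank F ↥(T' ⊔ Submodule.span F (Es 0 V')) := by
  rw [h.sup_top, finrank_top, ← Submodule.finrank_add_eq_of_isCompl h.dat.compl, h.dimV, add_comm]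

lemma Ctx.sgC (h : Ctx U K V' T' t e0 e1 e2 c s)
    (hQ : ∀ (U K V T : Submodule F W), Dat U K V T → Module.finrank F V ≤ s →
      GoodSub (Gp T V) (Gp U K) (Module.finrank F V)) (i : ℕ) (hi : i ≤ s) :
    Good (mmap (stW T' V' 0 i) (stW U K t (i + 2)) h.le (sg e0 e1 e2 c) h.sg_mem
      (fun g hg x _ => h.equi g hg x)) (s - i) := by
  obtain ⟨σ, hσ⟩ := exists_word (U := T') (E := Es 0 V') i (by rw [← h.hr']; omega)
  obtain ⟨V, T, hd⟩ := exists_dat (sp T' σ) V'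
  have hTT : T' ≤ T := (le_sp _ _).trans hd.hU
  have hσV : ∀ v ∈ σ, v ∈ V' := by
    intro v hv
    have := hσ.2.1 v hv
    rwa [mem_Es, sub_zero] at this
  have hdim : Module.finrank F V = s - i := by
    have h1 := hd.finrank_eq
    have h2 : sp T' σ ⊔ V' = ⊤ := by
      rw [eq_top_iff, ← h.dat.compl.sup_eq_top]
      exact sup_le le_sup_right ((le_sp _ _).trans le_sup_left)
    rw [h2, finrank_top, ← Submodule.finrank_add_eq_of_isCompl h.dat.compl, h.dimV,
      finrank_sp hσ.2.2, hσ.1] at h1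
    omega
  have hL' : Gp T V ≤ Gp T' V' := Gp_mono hTT hd.hV
  have hL : Gp T V ≤ Gp U K := hL'.trans h.le
  have hLσ : ∀ g ∈ Gp T V, σ.map g = σ := fun g hg =>
    map_eq_iff_fix.2 fun v hv => hg.1 v (hd.hU (mem_sp _ hv))
  have hα : Good (pmap hL' (stW T' V' 0 i) hσ hLσ) (s - i) := by
    refine pmap_good (Gp_mono (le_sp _ _) le_rfl) Gp_words hσ (fun g hg => mem_Gp_sp hg)
      (fun y hy => Wd_trans hσ hy) _ ?_ hL' hLσ
    rw [← hdim]
    exact hQ _ _ _ _ hd (by omega)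
  have hwK : K ⊓ T ≤ sp (sp U [e0, e1]) (σ.map (· + c)) := by
    rintro w ⟨hwK, hwT⟩
    have hw1 : w ∈ sp T' σ := by
      have : w ∈ V' ⊔ T' := by rw [h.dat.compl.sup_eq_top]; trivial
      obtain ⟨v, hv, a, ha, rfl⟩ := Submodule.mem_sup.1 this
      refine add_mem (hd.hK ⟨hv, ?_⟩) (le_sp _ _ ha)
      have := T.sub_mem hwT (hTT ha)
      rwa [add_sub_cancel_right] at this
    rw [sp_eq] at hw1
    obtain ⟨a, ha, b, hb, rfl⟩ := Submodule.mem_sup.1 hw1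
    have hbV : b ∈ V' := (Submodule.span_le.2 hσV) hb
    have haK : a ∈ K := by
      have := K.sub_mem hwK (h.dat.hV hbV)
      rwa [add_sub_cancel_right] at this
    refine add_mem (le_sp _ _ (h.dat.hK ⟨haK, ha⟩)) ?_
    refine (Submodule.span_le.2 ?_) hb
    intro v hv
    have h1 : v + c ∈ sp (sp U [e0, e1]) (σ.map (· + c)) := mem_sp _ (List.mem_map.2 ⟨v, hv, rfl⟩)
    have := Submodule.sub_mem _ h1 (le_sp _ _ h.hc)
    rwa [add_sub_cancel_right] at this
  have hPT : sp U [e0, e1] ≤ T := h.dat.hU.trans hTT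
  have hxT : sp (sp U [e0, e1]) (σ.map (· + c)) ≤ T := by
    refine sp_le hPT fun v hv => ?_
    obtain ⟨w, hw, rfl⟩ := List.mem_map.1 hv
    exact add_mem (hd.hU (mem_sp _ hw)) (hPT h.hc)
  have hfix : ∀ {a b : W}, sp U [a, b] = sp U [e0, e1] → ∀ g ∈ Gp T V,
      ([a, b] ++ σ.map (· + c)).map g = [a, b] ++ σ.map (· + c) := by
    intro a b hP g hg
    refine map_eq_iff_fix.2 fun v hv => hg.1 v ?_
    have := mem_sp U hv
    rw [sp_append, hP] at this
    exact hxT this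
  have hβ : Good (pmap hL (stW U K t (i + 2)) (h.words hσ h.m0 h.m1 h.h01 rfl)
      (hfix rfl)) (s - i) := by
    refine pmap_good (H := Gp (sp U ([e0, e1] ++ σ.map (· + c))) K) (Gp_mono (le_sp _ _) le_rfl)
      Gp_words _ (fun g hg => mem_Gp_sp hg)
      (fun y hy => Wd_trans (h.words hσ h.m0 h.m1 h.h01 rfl) hy) _ ?_ hL _
    rw [← hdim]
    refine hQ _ _ _ _ ⟨?_, hd.hV.trans h.dat.hV, hd.compl, ?_⟩ (by omega)
    · rw [sp_append]; exact hxT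
    · rw [sp_append]; exact hwK
  have hconj : ∀ {a b : W} (ha : a ∈ Es t K) (hb : b ∈ Es t K) (hab : Ind U [a, b])
      (hP : sp U [a, b] = sp U [e0, e1]), ∃ g ∈ Gp U K,
      ([e0, e1] ++ σ.map (· + c)).map g = [a, b] ++ σ.map (· + c) ∧
      ∀ l ∈ Gp T V, g * l = l * g := by
    intro a b ha hb hab hP
    have hI : ∀ {a b : W} (ha : a ∈ Es t K) (hb : b ∈ Es t K) (hab : Ind U [a, b])
      (hP : sp U [a, b] = sp U [e0, e1]), Ind (U ⊔ V) ([a, b] ++ σ.map (· + c)) ∧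
        ∀ v ∈ [a, b] ++ σ.map (· + c), v - e0 ∈ K ⊓ T := by
      intro a b ha hb hab hP
      have hw := h.words hσ ha hb hab hP
      refine ⟨hw.2.2.sup_disj (T := T) ?_ hd.compl.disjoint, fun v hv => ⟨?_, ?_⟩⟩
      · rw [sp_append, hP]; exact hxT
      · exact Es_sub (hw.2.1 v hv) h.m0
      · refine T.sub_mem (hxT ?_) (hPT h.m0')
        have := mem_sp U hv
        rwa [sp_append, hP] at this
    obtain ⟨g, hg, hg'⟩ := trans_words (by simp) (hI h.m0 h.m1 h.h01 rfl).1 (hI ha hb hab hP).1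
      (hI h.m0 h.m1 h.h01 rfl).2 (hI ha hb hab hP).2
    exact ⟨g, Gp_mono le_sup_left inf_le_left hg, hg', fun l hl =>
      Gp_comm (Gp_mono le_sup_right inf_le_right hg) hl⟩
  refine Good.of_comp (f := pmap hL' (stW T' V' 0 i) hσ hLσ) ?_ hα
  refine Homo.good ?_ hβ
  intro n a ha
  obtain ⟨g2, hg2, hg2', hg2c⟩ := hconj h.m0 h.m2 h.h02 h.p02
  obtain ⟨g3, hg3, hg3', hg3c⟩ := hconj h.m1 h.m2 h.h12 h.p12
  obtain ⟨c2, hc2⟩ := pmap_homo hL (stW U K t (i + 2)) (h.words hσ h.m0 h.m1 h.h01 rfl)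
    (h.words hσ h.m0 h.m2 h.h02 h.p02) hg2 hg2' hg2c (hfix rfl) n a ha
  obtain ⟨c3, hc3⟩ := pmap_homo hL (stW U K t (i + 2)) (h.words hσ h.m0 h.m1 h.h01 rfl)
    (h.words hσ h.m1 h.m2 h.h12 h.p12) hg3 hg3' hg3c (hfix rfl) n a ha
  refine ⟨c3 - c2, ?_⟩
  have q1 : (CMap.comp (mmap (stW T' V' 0 i) (stW U K t (i + 2)) h.le (sg e0 e1 e2 c) h.sg_mem
      (fun g hg x _ => h.equi g hg x)) (pmap hL' (stW T' V' 0 i) hσ hLσ)).f n a =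
      chm (Subgroup.inclusion h.le) (res (sg e0 e1 e2 c) h.sg_mem) n
        (chm (Subgroup.inclusion hL') (pt hσ) n a) := rfl
  have q2 : (Subgroup.inclusion h.le).comp (Subgroup.inclusion hL') = Subgroup.inclusion hL := rfl
  have q3 : (res (sg e0 e1 e2 c) h.sg_mem).comp (pt hσ) =
      pt (h.words hσ h.m0 h.m1 h.h01 rfl) - pt (h.words hσ h.m0 h.m2 h.h02 h.p02) +
        pt (h.words hσ h.m1 h.m2 h.h12 h.p12) := by
    apply AddMonoidHom.ext
    intro k
    apply Subtype.ext
    change sg e0 e1 e2 c (Finsupp.single σ k) = Finsupp.single _ k - Finsupp.single _ k +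
      Finsupp.single _ k
    rw [sg_apply, lmap_single, pre_single, pre_single, pre_single]
  rw [q1, chm_comp, q2, q3, chm_add, chm_sub, hc2, hc3]
  change _ = chm _ _ n a + bd _ n (c3 - c2)
  rw [map_sub]
  abel

end TC
end GLStab

namespace GLStab
set_option linter.unusedSectionVars false
section TC2
variable {F W : Type} [Field F] [AddCommGroup W] [Module F W]

lemma chm_sq {G M H N H' N' K P : Type} [Group G] [AddCommGroup M] [Group H] [AddCommGroup N]
    [Group H'] [AddCommGroup N'] [Group K] [AddCommGroup P] (f : G →* H) (φ : M →+ N) (g : H →* K)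
    (ψ : N →+ P) (f' : G →* H') (φ' : M →+ N') (g' : H' →* K) (ψ' : N' →+ P)
    (h : ∀ a, g (f a) = g' (f' a)) (h' : ∀ a, ψ (φ a) = ψ' (φ' a)) (n : ℕ)
    (x : (Fin n → G) →₀ M) : chm g ψ n (chm f φ n x) = chm g' ψ' n (chm f' φ' n x) := by
  rw [chm_comp, chm_comp, show g.comp f = g'.comp f' from MonoidHom.ext h,
    show ψ.comp φ = ψ'.comp φ' from AddMonoidHom.ext h']

lemma barMap_sq {G M H N H' N' K P : Type} [Group G] [AddCommGroup M] [Group H] [AddCommGroup N]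
    [Group H'] [AddCommGroup N'] [Group K] [AddCommGroup P] {ρ : G →* AddMonoid.End M}
    {σ : H →* AddMonoid.End N} {σ' : H' →* AddMonoid.End N'} {τ : K →* AddMonoid.End P}
    {f : G →* H} {φ : M →+ N} {g : H →* K}
    {ψ : N →+ P} {f' : G →* H'} {φ' : M →+ N'} {g' : H' →* K} {ψ' : N' →+ P}
    (k1 : ∀ g m, φ (ρ g m) = σ (f g) (φ m)) (k2 : ∀ g' m, ψ (σ g' m) = τ (g g') (ψ m))
    (k3 : ∀ g m, φ' (ρ g m) = σ' (f' g) (φ' m)) (k4 : ∀ g m, ψ' (σ' g m) = τ (g' g) (ψ' m))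
    (h : ∀ a, g (f a) = g' (f' a)) (h' : ∀ a, ψ (φ a) = ψ' (φ' a)) (n : ℕ)
    (x : (bar ρ).X n) : (barMap g ψ k2).f n ((barMap f φ k1).f n x) =
      (barMap g' ψ' k4).f n ((barMap f' φ' k3).f n x) :=
  chm_sq f φ g ψ f' φ' g' ψ' h h' n x

lemma mmap_sq {G H H' J : Subgroup (W ≃ₗ[F] W)} {M N N' P : AddSubgroup (List W →₀ ℤ)}
    {hM : Stb G M} {hN : Stb H N} {hN' : Stb H' N'} {hP : Stb J P} {a : G ≤ H} {b : H ≤ J}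
    {a' : G ≤ H'} {b' : H' ≤ J} {φ ψ φ' ψ' : (List W →₀ ℤ) →+ (List W →₀ ℤ)}
    {h1 : ∀ x ∈ N, ψ x ∈ P} {h2 : ∀ x ∈ M, φ x ∈ N} {h3 : ∀ x ∈ N', ψ' x ∈ P}
    {h4 : ∀ x ∈ M, φ' x ∈ N'} {k1 : ∀ g ∈ H, ∀ x ∈ N, ψ (lmap g x) = lmap g (ψ x)}
    {k2 : ∀ g ∈ G, ∀ x ∈ M, φ (lmap g x) = lmap g (φ x)}
    {k3 : ∀ g ∈ H', ∀ x ∈ N', ψ' (lmap g x) = lmap g (ψ' x)}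
    {k4 : ∀ g ∈ G, ∀ x ∈ M, φ' (lmap g x) = lmap g (φ' x)}
    (hs : ∀ x, ψ (φ x) = ψ' (φ' x)) (n : ℕ) (x : (bar (mact hM)).X n) :
    (mmap hN hP b ψ h1 k1).f n ((mmap hM hN a φ h2 k2).f n x) =
      (mmap hN' hP b' ψ' h3 k3).f n ((mmap hM hN' a' φ' h4 k4).f n x) :=
  by
  have e1 : ∀ z : G, Subgroup.inclusion b (Subgroup.inclusion a z) =
    Subgroup.inclusion b' (Subgroup.inclusion a' z) := fun z => Subtype.ext rfl
  have e2 : ∀ y : M, res ψ h1 (res φ h2 y) = res ψ' h3 (res φ' h4 y) :=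
    fun y => Subtype.ext (hs y.1)
  exact chm_sq (Subgroup.inclusion a) (res φ h2) (Subgroup.inclusion b) (res ψ h1) (Subgroup.inclusion a') (res φ' h4) (Subgroup.inclusion b') (res ψ' h3) e1 e2 n x

lemma ses_words {G : Subgroup (W ≃ₗ[F] W)} {M₁ M₂ M₃ : AddSubgroup (List W →₀ ℤ)} (h₁ : Stb G M₁)
    (h₂ : Stb G M₂) (h₃ : Stb G M₃) (p : (List W →₀ ℤ) →+ (List W →₀ ℤ))
    (hi : ∀ x ∈ M₁, (AddMonoidHom.id _) x ∈ M₂) (hp : ∀ x ∈ M₂, p x ∈ M₃)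
    (he : ∀ g ∈ G, ∀ x ∈ M₂, p (lmap g x) = lmap g (p x))
    (hsurj : ∀ y ∈ M₃, ∃ x ∈ M₂, p x = y) (hz : ∀ x ∈ M₁, p x = 0)
    (hex : ∀ x ∈ M₂, p x = 0 → x ∈ M₁) :
    SES (mmap h₁ h₂ (le_refl G) (AddMonoidHom.id _) hi (fun _ _ _ _ => rfl))
      (mmap h₂ h₃ (le_refl G) p hp he) := by
  refine ses_bar (ρ₁ := mact h₁) (ρ₂ := mact h₂) (ρ₃ := mact h₃)
    (res (AddMonoidHom.id _) hi) (res p hp) ?_ ?_ ?_ ?_ ?_ ?_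
  · intro a b hab
    exact Subtype.ext (show (a : List W →₀ ℤ) = b from congrArg (fun z : M₂ => (z : List W →₀ ℤ)) hab)
  · rintro ⟨y, hy⟩
    obtain ⟨x, hx, hxy⟩ := hsurj y hy
    exact ⟨⟨x, hx⟩, Subtype.ext hxy⟩
  · rintro ⟨x, hx⟩
    exact Subtype.ext (hz x hx)
  · rintro ⟨x, hx⟩ hx0
    exact ⟨⟨x, hex x hx (congrArg Subtype.val hx0)⟩, rfl⟩

/-- Cycles on a set of words. -/
noncomputable def Zc (S : Set (List W)) : AddSubgroup (List W →₀ ℤ) := sup S ⊓ del.ker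

lemma mem_Zc {S : Set (List W)} {x} : x ∈ Zc S ↔ x ∈ sup S ∧ del x = 0 := Iff.rfl

/-- Shifted cycles. -/
noncomputable def Zp (T V : Submodule F W) : ℕ → AddSubgroup (List W →₀ ℤ)
  | 0 => ⊥
  | i + 1 => Zc (Wd T (Es 0 V) i)

lemma stb_Zc {G : Subgroup (W ≃ₗ[F] W)} {S : Set (List W)} (h : Stb G (sup S)) : Stb G (Zc S) :=
  fun g hg x hx => ⟨h g hg x hx.1, by
    change del (lmap g x) = 0
    rw [← lmap_del, (mem_Zc.1 hx).2, map_zero]⟩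

lemma stb_Zp0 (G : Subgroup (W ≃ₗ[F] W)) (T V : Submodule F W) : Stb G (Zp T V 0) := by
  intro g _ x hx
  have : x = 0 := hx
  rw [this, map_zero]; exact zero_mem _

lemma stb_Zp (T V : Submodule F W) : ∀ i, Stb (Gp T V) (Zp T V i)
  | 0 => stb_Zp0 _ T V
  | i + 1 => stb_Zc (stW T V 0 i)

variable {U K V' T' : Submodule F W} {t e0 e1 e2 c : W} {s : ℕ}

lemma Ctx.sg_memZ (h : Ctx U K V' T' t e0 e1 e2 c s) : ∀ {i : ℕ},
    ∀ x ∈ Zp T' V' i, sg e0 e1 e2 c x ∈ Zc (Wd U (Es t K) (i + 1))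
  | 0, x, hx => by
    have : x = 0 := hx
    rw [this, map_zero]; exact zero_mem _
  | i + 1, x, hx => by
    refine ⟨h.sg_mem x hx.1, ?_⟩
    change del (sg e0 e1 e2 c x) = 0
    rw [sg_del, (mem_Zc.1 hx).2, map_zero]

variable [FiniteDimensional F W]

lemma Ctx.sgZ_aux (h : Ctx U K V' T' t e0 e1 e2 c s)
    (hQ : ∀ (U K V T : Submodule F W), Dat U K V T → Module.finrank F V ≤ s →
      GoodSub (Gp T V) (Gp U K) (Module.finrank F V)) (j i : ℕ) (hij : i + j ≤ s)
    (ih : ∀ k, k + 1 = j →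
      Good (mmap (stb_Zp T' V' (i + 1)) (stb_Zc (stW U K t (i + 1 + 1))) h.le (sg e0 e1 e2 c)
        h.sg_memZ (fun g hg x _ => h.equi g hg x)) k) :
    Good (mmap (stb_Zp T' V' i) (stb_Zc (stW U K t (i + 1))) h.le (sg e0 e1 e2 c) h.sg_memZ
      (fun g hg x _ => h.equi g hg x)) j := by
  have hp' : ∀ x ∈ sup (Wd T' (Es 0 V') i), del x ∈ Zp T' V' i := by
    intro x hx
    cases i with
    | zero =>
      have := map_mem_of_sup del (⊥ : AddSubgroup (List W →₀ ℤ)) ?_ hx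
      · exact this
      rintro l ⟨hl, _⟩ n
      rw [List.length_eq_zero_iff.1 hl, del_single_nil]
      exact zero_mem _
    | succ i => exact ⟨del_mem_Wd hx, del_del x⟩
  have hp : ∀ x ∈ sup (Wd U (Es t K) (i + 1 + 1)), del x ∈ Zc (Wd U (Es t K) (i + 1)) :=
    fun x hx => ⟨del_mem_Wd hx, del_del x⟩
  have rA := ses_words (stb_Zp T' V' (i + 1)) (stW T' V' 0 i) (stb_Zp T' V' i) del
    (fun x hx => hx.1) hp' (fun g hg x hx => (lmap_del g x).symm)
    (by
      intro y hy
      cases i with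
      | zero =>
        have : y = 0 := hy
        exact ⟨0, zero_mem _, by rw [this, map_zero]⟩
      | succ i =>
        exact acyclic i T' (Es 0 V') (by rw [← h.hr']; omega) y hy.1 hy.2)
    (fun x hx => hx.2) (fun x hx hx0 => ⟨hx, hx0⟩)
  have rB := ses_words (stb_Zc (stW U K t (i + 1 + 1))) (stW U K t (i + 1 + 1))
    (stb_Zc (stW U K t (i + 1))) del
    (fun x hx => hx.1) hp (fun g hg x hx => (lmap_del g x).symm)
    (by
      intro y hy
      exact acyclic (i + 1) U (Es t K) (by rw [← h.hr]; omega) y hy.1 hy.2)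
    (fun x hx => hx.2) (fun x hx hx0 => ⟨hx, hx0⟩)
  refine good_step rA rB
    (f₁ := mmap (stb_Zp T' V' (i + 1)) (stb_Zc (stW U K t (i + 1 + 1))) h.le (sg e0 e1 e2 c)
        h.sg_memZ (fun g hg x _ => h.equi g hg x))
    (f₂ := mmap (stW T' V' 0 i) (stW U K t (i + 1 + 1)) h.le (sg e0 e1 e2 c) h.sg_mem
      (fun g hg x _ => h.equi g hg x)) ?_ ?_ ((h.sgC hQ i (by omega)).mono (by omega)) ih
  · intro n x
    exact mmap_sq (fun _ => by simp only [AddMonoidHom.id_apply]) n x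
  · intro n x
    have hs : ∀ a, sg e0 e1 e2 c (del a) = del (sg e0 e1 e2 c a) :=
      fun a => (sg_del e0 e1 e2 c a).symm
    exact mmap_sq (φ := del) (ψ := sg e0 e1 e2 c) (φ' := sg e0 e1 e2 c) (ψ' := del) hs n x

lemma Ctx.sgZ (h : Ctx U K V' T' t e0 e1 e2 c s)
    (hQ : ∀ (U K V T : Submodule F W), Dat U K V T → Module.finrank F V ≤ s →
      GoodSub (Gp T V) (Gp U K) (Module.finrank F V)) (j : ℕ) : ∀ (i : ℕ), i + j ≤ s →
    Good (mmap (stb_Zp T' V' i) (stb_Zc (stW U K t (i + 1))) h.le (sg e0 e1 e2 c) h.sg_memZ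
      (fun g hg x _ => h.equi g hg x)) j := by
  induction j with
  | zero => exact fun i hi => Ctx.sgZ_aux h hQ 0 i hi (fun k hk => by omega)
  | succ j ih =>
    refine fun i hi => Ctx.sgZ_aux h hQ (j + 1) i hi (fun k hk => ?_)
    obtain rfl : k = j := by omega
    exact ih (i + 1) (by omega)

lemma Ctx.tc (h : Ctx U K V' T' t e0 e1 e2 c s)
    (hQ : ∀ (U K V T : Submodule F W), Dat U K V T → Module.finrank F V ≤ s →
      GoodSub (Gp T V) (Gp U K) (Module.finrank F V)) {w : W} (hw : w ∈ Es t K) (hwU : w ∉ U) :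
    GoodSub (Gp (U ⊔ Submodule.span F {w}) K) (Gp U K) (s + 1) := by
  have hle : Gp (U ⊔ Submodule.span F {w}) K ≤ Gp U K := Gp_mono le_sup_left le_rfl
  refine ⟨hle, ?_⟩
  have hz0 : ∀ x ∈ Zp T' V' 0, (AddMonoidHom.id _) x ∈ Zc (Wd U (Es t K) (0 + 1)) := by
    intro x hx
    have : x = 0 := hx
    rw [this, map_zero]; exact zero_mem _
  have g1 : Good (mmap (stb_Zp0 (Gp U K) T' V') (stb_Zc (stW U K t (0 + 1))) le_rfl
      (AddMonoidHom.id _) hz0 (fun _ _ _ _ => rfl)) s := by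
    have hu : Subsingleton (Zp T' V' 0) := ⟨fun a b => Subtype.ext (by
      have ha : a.1 = 0 := a.2
      have hb : b.1 = 0 := b.2
      rw [ha, hb])⟩
    have hu1 : ∀ n (G : Type), Subsingleton ((Fin n → G) →₀ (Zp T' V' 0)) := fun n G =>
      ⟨fun a b => Finsupp.ext fun v => Subsingleton.elim _ _⟩
    let f := mmap (stb_Zp T' V' 0) (stb_Zp0 (Gp U K) T' V') h.le
      (AddMonoidHom.id _) (fun x hx => hx) (fun _ _ _ _ => rfl)
    refine Good.of_comp (f := f) ?_ ?_
    · refine good_congr ?_ (h.sgZ hQ s 0 (by omega))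
      intro n x
      have hx : x = 0 := (hu1 n _).elim _ _
      rw [hx, map_zero, map_zero]
    · refine good_of_bij _ (fun n => ⟨fun a b _ => (hu1 n _).elim _ _, fun y => ⟨0, ?_⟩⟩) s
      exact (hu1 n _).elim _ _
  have rA := ses_words (stb_Zp0 (Gp U K) T' V') (stW U K t (0 + 1)) (stW U K t (0 + 1))
    (AddMonoidHom.id _) (fun x hx => (hz0 x hx).1) (fun x hx => hx) (fun _ _ _ _ => rfl)
    (fun y hy => ⟨y, hy, rfl⟩) (fun x hx => hx) (fun x hx hx0 => hx0)
  have rB := ses_words (stb_Zc (stW U K t (0 + 1))) (stW U K t (0 + 1))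
    (stW U K t 0) del
    (fun x hx => hx.1) (fun x hx => del_mem_Wd hx) (fun g hg x hx => (lmap_del g x).symm)
    (by
      intro y hy
      refine acyclic 0 U (Es t K) (by rw [← h.hr]; omega) y hy ?_
      have := map_mem_of_sup del (⊥ : AddSubgroup (List W →₀ ℤ)) ?_ hy
      · exact this
      rintro l ⟨hl, _⟩ n
      rw [List.length_eq_zero_iff.1 hl, del_single_nil]
      exact zero_mem _)
    (fun x hx => hx.2) (fun x hx hx0 => ⟨hx, hx0⟩)
  have g3 : Good (mmap (stW U K t (0 + 1)) (stW U K t 0) le_rfl del (fun x hx => del_mem_Wd hx)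
      (fun g hg x hx => (lmap_del g x).symm)) (s + 1) := by
    refine good_step rA rB
      (f₁ := mmap (stb_Zp0 (Gp U K) T' V') (stb_Zc (stW U K t (0 + 1))) le_rfl
        (AddMonoidHom.id _) hz0 (fun _ _ _ _ => rfl))
      (f₂ := mmap (stW U K t (0 + 1)) (stW U K t (0 + 1)) le_rfl
        (AddMonoidHom.id _) (fun x hx => hx) (fun _ _ _ _ => rfl)) ?_ ?_ ?_ ?_
    · intro n x
      exact mmap_sq (fun _ => by simp only [AddMonoidHom.id_apply]) n x
    · intro n x
      exact mmap_sq (fun _ => by simp only [AddMonoidHom.id_apply]) n x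
    · exact good_of_bij _ (fun n => chm_bij (AddMonoidHom.id _) Function.bijective_id n) _
    · intro k hk
      obtain rfl : k = s := by omega
      exact g1
  have hwW : [w] ∈ Wd U (Es t K) (0 + 1) := ⟨rfl, by simpa using hw, hwU, trivial⟩
  have g4 : Good (pmap hle (stW U K t (0 + 1)) hwW
      (fun g hg => (mem_Gp_sp (l := [w]) (hle hg)).1 hg)) (s + 1) :=
    shapiro_words hle Gp_words hwW _ (fun g hg => (mem_Gp_sp hg).2)
      (fun y hy => Wd_trans hwW hy) _
  let ε : sup (Wd U (Es t K) 0) →+ ℤ := (Finsupp.applyAddHom []).comp (AddSubgroup.subtype _)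
  have hε : ∀ x, ε x = x.1 [] := fun _ => rfl
  have hnil : [] ∈ Wd U (Es t K) 0 := ⟨rfl, by simp, trivial⟩
  have hall : ∀ x : sup (Wd U (Es t K) 0), x = pt hnil (ε x) := by
    rintro ⟨x, hx⟩
    apply Subtype.ext
    rw [pt_coe, hε]
    refine Finsupp.ext fun l => ?_
    by_cases hl : l = []
    · subst hl; simp
    · rw [Finsupp.single_eq_of_ne (by simpa using hl)]
      by_contra h0
      exact hl (List.length_eq_zero_iff.1 (hx l h0).1)
  have hεp : ∀ n, ε (pt hnil n) = n := fun n => by rw [hε, pt_coe]; simp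
  have g5 : Good (barMap (ρ := mact (stW U K t 0)) (σ := (1 : Gp U K →* AddMonoid.End ℤ))
      (MonoidHom.id _) ε (by
        intro g m
        rw [hall m]
        generalize ε m = k
        change ε (mact (stW U K t 0) (Subgroup.inclusion le_rfl g) (pt hnil k)) = ε (pt hnil k)
        rw [← pt_equi le_rfl (stW U K t 0) hnil (fun _ _ => rfl)]
        rfl)) (s + 1) := by
    refine good_of_bij _ (fun n => chm_bij ε ⟨fun a b hab => ?_, fun k => ⟨_, hεp k⟩⟩ n) _
    rw [hall a, hall b, hab]
  have g6 := good_barMap_comp (k := Subgroup.inclusion hle) (χ := pt hnil)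
    (h'' := pt_equi hle (stW U K t 0) hnil (fun _ _ => rfl)) (fun _ => rfl)
    (fun n => Subtype.ext (by
      change Finsupp.single [] n = del (Finsupp.single [w] n)
      rw [del_single_cons, del_single_nil, map_zero, sub_zero])) g3 g4
  exact good_barMap_comp (fun _ => rfl) (fun n => (hεp n).symm) g5 g6

end TC2
end GLStab

namespace GLStab
set_option linter.unusedSectionVars false
section TC3
variable {F W : Type} [Field F] [AddCommGroup W] [Module F W]

lemma ind2_iff {U : Submodule F W} {e f : W} :
    Ind U [e, f] ↔ ∀ a b : F, a • e + b • f ∈ U → a = 0 ∧ b = 0 := by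
  constructor
  · rintro ⟨h1, h2, -⟩ a b hab
    have hb : b = 0 := by
      by_contra hb
      apply h2
      refine (Submodule.smul_mem_iff _ hb).1 ?_
      have := sub_mem (Submodule.mem_sup_left (T := Submodule.span F {e}) hab)
        (Submodule.mem_sup_right (S := U) (Submodule.smul_mem _ a (Submodule.mem_span_singleton_self e)))
      rwa [add_sub_cancel_left] at this
    refine ⟨?_, hb⟩
    by_contra ha
    apply h1
    rw [hb, zero_smul, add_zero] at hab
    exact (Submodule.smul_mem_iff _ ha).1 hab
  · intro h
    refine ⟨fun he => one_ne_zero (h 1 0 (by simpa using he)).1, fun hf => ?_, trivial⟩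
    obtain ⟨u, hu, v, hv, huv⟩ := Submodule.mem_sup.1 hf
    obtain ⟨c, rfl⟩ := Submodule.mem_span_singleton.1 hv
    refine one_ne_zero (h (-c) 1 ?_).2
    rw [← huv]
    have : (-c) • e + (1 : F) • (u + c • e) = u := by module
    rwa [this]

lemma ind2_lin {U : Submodule F W} {e f x y : W} (h : Ind U [e, f]) (a b c d : F)
    (hd : a * d - b * c ≠ 0) (hx : x = a • e + b • f) (hy : y = c • e + d • f) :
    Ind U [x, y] ∧ sp U [x, y] = sp U [e, f] := by
  subst hx hy
  constructor
  · rw [ind2_iff] at h ⊢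
    intro p q hpq
    have h1 := h (p * a + q * c) (p * b + q * d) (by
      convert hpq using 1; module)
    constructor
    · refine (mul_eq_zero.1 (?_ : p * (a * d - b * c) = 0)).resolve_right hd
      linear_combination d * h1.1 - c * h1.2
    · refine (mul_eq_zero.1 (?_ : q * (a * d - b * c) = 0)).resolve_right hd
      linear_combination a * h1.2 - b * h1.1
  · have me : e ∈ sp U [e, f] := mem_sp _ (by simp)
    have mf : f ∈ sp U [e, f] := mem_sp _ (by simp)
    apply le_antisymm
    · refine sp_le (le_sp _ _) ?_
      intro v hv
      simp only [List.mem_cons, List.not_mem_nil, or_false] at hv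
      rcases hv with rfl | rfl <;>
      exact add_mem (Submodule.smul_mem _ _ me) (Submodule.smul_mem _ _ mf)
    · have mx : a • e + b • f ∈ sp U [a • e + b • f, c • e + d • f] := mem_sp _ (by simp)
      have my : c • e + d • f ∈ sp U [a • e + b • f, c • e + d • f] := mem_sp _ (by simp)
      refine sp_le (le_sp _ _) ?_
      intro v hv
      simp only [List.mem_cons, List.not_mem_nil, or_false] at hv
      rcases hv with rfl | rfl <;> refine (Submodule.smul_mem_iff _ hd).1 ?_
      · have := sub_mem (Submodule.smul_mem _ d mx) (Submodule.smul_mem _ b my)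
        convert this using 1; module
      · have := sub_mem (Submodule.smul_mem _ a my) (Submodule.smul_mem _ c mx)
        convert this using 1; module

variable [FiniteDimensional F W]

lemma finrank_sup_span {U : Submodule F W} {t : W} (ht : t ∉ U) :
    Module.finrank F ↥(U ⊔ Submodule.span F {t}) = Module.finrank F U + 1 := by
  exact finrank_sp (U := U) (l := [t]) ⟨ht, trivial⟩

lemma tcA (hF : ∃ x : F, x ≠ 0 ∧ x ≠ 1) {U K : Submodule F W} {t : W} (ht : t ∉ U ⊔ K) (m : ℕ)
    (hm : Module.finrank F U + m = Module.finrank F ↥(U ⊔ K))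
    (hQ : ∀ (U K V T : Submodule F W), Dat U K V T → Module.finrank F V < m →
      GoodSub (Gp T V) (Gp U K) (Module.finrank F V)) :
    GoodSub (Gp (U ⊔ Submodule.span F {t}) K) (Gp U K) m := by
  rcases m with _ | s
  · exact GoodSub.zero (Gp_mono le_sup_left le_rfl)
  obtain ⟨lam, h0, h1⟩ := hF
  obtain ⟨f, hfK, hfU⟩ : ∃ f ∈ K, f ∉ U := by
    by_contra hcon
    push Not at hcon
    rw [sup_eq_left.2 (show K ≤ U from hcon)] at hm
    omega
  have htU : t ∉ U := fun h => ht (Submodule.mem_sup_left h)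
  have hI : Ind U [t, f] := by
    rw [ind2_iff]
    intro a b hab
    have ha : a = 0 := by
      by_contra ha
      apply ht
      refine (Submodule.smul_mem_iff _ ha).1 ?_
      have := sub_mem (Submodule.mem_sup_left (T := K) hab)
        (Submodule.mem_sup_right (S := U) (Submodule.smul_mem _ b hfK))
      rwa [add_sub_cancel_right] at this
    refine ⟨ha, ?_⟩
    by_contra hb
    rw [ha, zero_smul, zero_add] at hab
    exact hfU ((Submodule.smul_mem_iff _ hb).1 hab)
  obtain ⟨i1, s1⟩ := ind2_lin (x := t) (y := t + f) hI 1 0 1 1 (by simp) (by module) (by module)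
  obtain ⟨i2, s2⟩ := ind2_lin (x := t) (y := t + lam • f) hI 1 0 1 lam (by simpa using h0)
    (by module) (by module)
  obtain ⟨i3, s3⟩ := ind2_lin (x := t + f) (y := t + lam • f) hI 1 1 1 lam
    (by simpa [sub_eq_zero] using h1) (by module) (by module)
  obtain ⟨V', T', hD⟩ := exists_dat (sp U [t, t + f]) K
  have hsp : U ⊔ Submodule.span F (Es t K) = (U ⊔ K) ⊔ Submodule.span F {t} := by
    have := sup_span_Es (t := t) (e := t) (U ⊔ Submodule.span F {t}) K (by simp [mem_Es])
      (Submodule.mem_sup_right (Submodule.mem_span_singleton_self t))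
    rw [sup_right_comm U K, ← this, sup_assoc]
    congr 1
    symm
    rw [sup_eq_right, Submodule.span_singleton_le_iff_mem]
    exact Submodule.subset_span (by simp [mem_Es])
  have hC : Ctx U K V' T' t t (t + f) (t + lam • f) t s :=
    { hr := by rw [hsp, finrank_sup_span ht, ← hm]; ring
      m0 := by simp [mem_Es]
      m1 := by simpa [mem_Es] using hfK
      m2 := by simpa [mem_Es] using Submodule.smul_mem _ _ hfK
      mc := by simp [mem_Es]
      h01 := i1
      h02 := i2
      h12 := i3
      p02 := by rw [s2, s1]
      p12 := by rw [s3, s1]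
      hc := mem_sp _ (by simp)
      dat := hD }
  exact hC.tc (fun U K V T h hV => hQ U K V T h (by omega)) (by simp [mem_Es]) htU

lemma tcM {U K : Submodule F W} {w : W} (hw : w ∈ K) (hwU : w ∉ U) (m : ℕ)
    (hm : Module.finrank F U + (m + 1) = Module.finrank F ↥(U ⊔ K))
    (hQ : ∀ (U K V T : Submodule F W), Dat U K V T → 
      GoodSub (Gp T V) (Gp U K) (Module.finrank F V)) :
    GoodSub (Gp (U ⊔ Submodule.span F {w}) K) (Gp U K) m := by
  rcases m with _ | s
  · exact GoodSub.zero (Gp_mono le_sup_left le_rfl)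
  obtain ⟨f, hfK, hfU⟩ : ∃ f ∈ K, f ∉ U ⊔ Submodule.span F {w} := by
    by_contra hcon
    push Not at hcon
    have h1 : U ⊔ K ≤ U ⊔ Submodule.span F {w} := sup_le le_sup_left hcon
    have h2 := Submodule.finrank_mono h1
    rw [finrank_sup_span hwU] at h2
    omega
  have hI : Ind U [w, f] := ⟨hwU, hfU, trivial⟩
  obtain ⟨i2, s2⟩ := ind2_lin (x := w) (y := w + f) hI 1 0 1 1 (by simp) (by module) (by module)
  obtain ⟨i3, s3⟩ := ind2_lin (x := f) (y := w + f) hI 0 1 1 1 (by simp) (by module) (by module)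
  obtain ⟨V', T', hD⟩ := exists_dat (sp U [w, f]) K
  have hsp : U ⊔ Submodule.span F (Es 0 K) = U ⊔ K :=
    sup_span_Es U K (by simp [mem_Es] : (0 : W) ∈ Es 0 K) (zero_mem _)
  have hC : Ctx U K V' T' 0 w f (w + f) 0 s :=
    { hr := by rw [hsp, ← hm]
      m0 := by simpa [mem_Es] using hw
      m1 := by simpa [mem_Es] using hfK
      m2 := by simpa [mem_Es] using add_mem hw hfK
      mc := by simp [mem_Es]
      h01 := hI
      h02 := i2
      h12 := i3
      p02 := s2
      p12 := s3
      hc := zero_mem _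
      dat := hD }
  exact hC.tc (fun U K V T h hV => hQ U K V T h) (by simpa [mem_Es] using hw) hwU

end TC3
end GLStab

namespace GLStab
set_option linter.unusedSectionVars false
section QQ

lemma good_tm_equiv {G H : Type} [Group G] [Group H] (e : G ≃* H) (m : ℕ) :
    Good (tm e.toMonoidHom) m := by
  refine good_of_bij _ (fun n => ?_) m
  change Function.Bijective (chm e.toMonoidHom (AddMonoidHom.id ℤ) n)
  refine Function.bijective_iff_has_inverse.2
    ⟨chm e.symm.toMonoidHom (AddMonoidHom.id ℤ) n, fun x => ?_, fun x => ?_⟩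
  · rw [chm_comp, show e.symm.toMonoidHom.comp e.toMonoidHom = MonoidHom.id G from
      MonoidHom.ext fun x => e.symm_apply_apply x, AddMonoidHom.id_comp, chm_id]
    simp
  · rw [chm_comp, show e.toMonoidHom.comp e.symm.toMonoidHom = MonoidHom.id H from
      MonoidHom.ext fun x => e.apply_symm_apply x, AddMonoidHom.id_comp, chm_id]
    simp

lemma GoodSub.of_map {H H' : Type} [Group H] [Group H'] (δ : H ≃* H') {A B : Subgroup H} {m : ℕ}
    (hAB : A ≤ B) (h : GoodSub (A.map (δ : H →* H')) (B.map (δ : H →* H')) m) : GoodSub A B m := by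
  obtain ⟨h1, h2⟩ := h
  refine ⟨hAB, ?_⟩
  have g1 := good_tm_equiv (δ.subgroupMap A) m
  have g2 := good_tm_equiv (δ.subgroupMap B).symm m
  have g3 : Good (tm ((Subgroup.inclusion h1).comp (δ.subgroupMap A).toMonoidHom)) m :=
    good_barMap_comp (fun _ => rfl) (fun _ => rfl) h2 g1
  refine good_barMap_comp (fun a => ?_) (fun _ => rfl) g2 g3
  change _ = (δ.subgroupMap B).symm _
  rw [MulEquiv.eq_symm_apply]
  rfl

variable {F W : Type} [Field F] [AddCommGroup W] [Module F W] [FiniteDimensional F W]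

lemma dual_ext {v w : W} (h : ∀ φ : Module.Dual F W, φ v = φ w) : v = w := by
  rw [← sub_eq_zero, ← Module.forall_dual_apply_eq_zero_iff F]
  intro φ
  rw [map_sub, h, sub_self]

/-- The contragredient. -/
noncomputable def dl : (W ≃ₗ[F] W) →* (Module.Dual F W ≃ₗ[F] Module.Dual F W) where
  toFun g := (g⁻¹).dualMap
  map_one' := by ext; rfl
  map_mul' a b := by ext; rfl

lemma dl_apply (g : W ≃ₗ[F] W) (φ : Module.Dual F W) (w : W) : dl g φ w = φ (g⁻¹ w) := rfl

lemma dl_bij : Function.Bijective (dl : (W ≃ₗ[F] W) →* _) := by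
  constructor
  · rw [injective_iff_map_eq_one]
    intro g hg
    have h : g⁻¹ = 1 := by
      apply LinearEquiv.ext
      intro w
      refine dual_ext (F := F) ?_
      intro φ
      rw [← dl_apply, hg]; rfl
    simpa using h
  · intro h
    let k : W ≃ₗ[F] W := (Module.evalEquiv F W).trans (h.dualMap.trans (Module.evalEquiv F W).symm)
    refine ⟨k⁻¹, ?_⟩
    apply LinearEquiv.ext
    intro φ
    apply LinearMap.ext
    intro w
    rw [dl_apply, inv_inv]
    change φ ((Module.evalEquiv F W).symm (h.dualMap (Module.evalEquiv F W w))) = _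
    rw [Module.apply_evalEquiv_symm_apply]
    rfl

lemma dl_mem (U K : Submodule F W) (g : W ≃ₗ[F] W) :
    dl g ∈ Gp K.dualAnnihilator U.dualAnnihilator ↔ g ∈ Gp U K := by
  rw [← inv_mem_iff (x := g), mem_Gp, mem_Gp, and_comm]
  refine and_congr ?_ ?_
  · constructor
    · intro h u hu
      refine dual_ext (F := F) ?_
      intro φ
      have := (Submodule.mem_dualAnnihilator _).1 (h φ) u hu
      rwa [LinearMap.sub_apply, sub_eq_zero] at this
    · intro h φ
      rw [Submodule.mem_dualAnnihilator]
      intro u hu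
      rw [LinearMap.sub_apply, dl_apply, h u hu, sub_self]
  · constructor
    · intro h w
      rw [← Subspace.forall_mem_dualAnnihilator_apply_eq_zero_iff]
      intro φ hφ
      rw [map_sub, sub_eq_zero]
      exact DFunLike.congr_fun (h φ hφ) w
    · intro h φ hφ
      apply LinearMap.ext
      intro w
      have := (Submodule.mem_dualAnnihilator _).1 hφ _ (h w)
      rwa [map_sub, sub_eq_zero] at this

lemma dl_map (U K : Submodule F W) :
    (Gp U K).map ((MulEquiv.ofBijective dl dl_bij : (W ≃ₗ[F] W) ≃* _) : (W ≃ₗ[F] W) →* _) =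
      Gp K.dualAnnihilator U.dualAnnihilator := by
  ext h
  obtain ⟨g, rfl⟩ := dl_bij.2 h
  rw [dl_mem]
  constructor
  · rintro ⟨g', hg', he⟩
    rwa [← dl_bij.1 he]
  · exact fun hg => ⟨g, hg, rfl⟩

lemma stepB (hF : ∃ x : F, x ≠ 0 ∧ x ≠ 1) {K V T : Submodule F W}
    (hQ : ∀ (U' K' V' T' : Submodule F W), Dat U' K' V' T' →
      Module.finrank F V' < Module.finrank F V → GoodSub (Gp T' V') (Gp U' K') (Module.finrank F V'))
    (base : GoodSub (Gp T V) (Gp T K) (Module.finrank F V)) (k : ℕ) :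
    ∀ U : Submodule F W, Dat U K V T → Module.finrank F T ≤ Module.finrank F U + k →
      GoodSub (Gp T V) (Gp U K) (Module.finrank F V) := by
  induction k with
  | zero =>
    intro U hD hk
    obtain rfl : U = T := Submodule.eq_of_le_of_finrank_le hD.hU (by simpa using hk)
    exact base
  | succ k ih =>
    intro U hD hk
    by_cases hT : T ≤ U ⊔ K
    · obtain rfl : U = T := by
        apply le_antisymm hD.hU
        intro t ht
        obtain ⟨u, hu, x, hx, rfl⟩ := Submodule.mem_sup.1 (hT ht)
        refine add_mem hu (hD.hK ⟨hx, ?_⟩)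
        have := sub_mem ht (hD.hU hu)
        rwa [add_sub_cancel_left] at this
      exact base
    · obtain ⟨t, htT, ht⟩ := Set.not_subset.1 hT
      have h1 : Dat (U ⊔ Submodule.span F {t}) K V T :=
        ⟨sup_le hD.hU ((Submodule.span_singleton_le_iff_mem _ _).2 htT), hD.hV, hD.compl,
          hD.hK.trans le_sup_left⟩
      have htU : t ∉ U := fun h => ht (Submodule.mem_sup_left h)
      have h2 := ih _ h1 (by rw [finrank_sup_span htU]; omega)
      refine h2.trans (tcA hF ht _ ?_ hQ)
      rw [add_comm]
      exact hD.finrank_eq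

end QQ

theorem QQ_all {F : Type} [Field F] (hF : ∃ x : F, x ≠ 0 ∧ x ≠ 1) (m : ℕ) :
    ∀ {W : Type} [AddCommGroup W] [Module F W] [FiniteDimensional F W] (U K V T : Submodule F W),
      Dat U K V T → Module.finrank F V = m → GoodSub (Gp T V) (Gp U K) m := by
  induction m using Nat.strong_induction_on with
  | _ m ih =>
    intro W _ _ _ U K V T hD hV
    subst hV
    refine stepB hF (fun U' K' V' T' hD' hV' => ih _ hV' U' K' V' T' hD' rfl) ?_ _ U hD
      (Nat.le_add_left _ _)
    have hDT : Dat T K V T := ⟨le_rfl, hD.hV, hD.compl, inf_le_right⟩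
    refine GoodSub.of_map (MulEquiv.ofBijective dl dl_bij) (Gp_mono le_rfl hD.hV) ?_
    rw [dl_map, dl_map]
    have hc := Subspace.isCompl_dualAnnihilator hD.compl
    have hfr : Module.finrank F T.dualAnnihilator = Module.finrank F V := by
      have h1 := Subspace.finrank_add_finrank_dualAnnihilator_eq T
      have h2 := Submodule.finrank_add_eq_of_isCompl hD.compl
      omega
    have hD2 : Dat K.dualAnnihilator T.dualAnnihilator T.dualAnnihilator V.dualAnnihilator :=
      ⟨Submodule.dualAnnihilator_anti hD.hV, le_rfl, hc.symm, by
        rw [inf_comm, hc.inf_eq_bot]; exact bot_le⟩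
    have := stepB hF (fun U' K' V' T' hD' hV' => ih _ (hfr ▸ hV') U' K' V' T' hD' rfl)
      (GoodSub.refl _ _) _ _ hD2 (Nat.le_add_left _ _)
    rwa [hfr] at this

end GLStab

namespace GLStab
set_option linter.unusedSectionVars false

section Translate
open GroupHomologyBar
variable {G H : Type} [Group G] [Group H]

lemma bd_eq_d (n : ℕ) (x : (Fin (n + 1) → G) →₀ ℤ) :
    bd (1 : G →* AddMonoid.End ℤ) n x = d G ℤ n x := by
  refine bar_ext (f := bd (1 : G →* AddMonoid.End ℤ) n) (g := (d G ℤ n).toAddMonoidHom) ?_ x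
  intro v m
  rw [bd_single]
  exact (d_single ℤ v m).symm

lemma chm_eq_map (f : G →* H) (n : ℕ) (x : (Fin n → G) →₀ ℤ) :
    chm f (AddMonoidHom.id ℤ) n x = chainsMap ℤ f n x := by
  refine bar_ext (f := chm f (AddMonoidHom.id ℤ) n) (g := (chainsMap ℤ f n).toAddMonoidHom) ?_ x
  intro v m
  rw [chm_single]
  exact (chainsMap_single ℤ f v m).symm

lemma cyc_iff (n : ℕ) (x : (Fin n → G) →₀ ℤ) :
    (bar (1 : G →* AddMonoid.End ℤ)).cyc n x ↔ x ∈ cycles G ℤ n := by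
  cases n with
  | zero => exact ⟨fun _ => trivial, fun _ => trivial⟩
  | succ n =>
    change bd (1 : G →* AddMonoid.End ℤ) n x = 0 ↔ d G ℤ n x = 0
    rw [bd_eq_d]

lemma surj_induced {f : G →* H} {n : ℕ} (h : Surj (tm f) n) :
    Function.Surjective (inducedMap ℤ f n) := by
  intro y
  obtain ⟨⟨y, hy⟩, rfl⟩ := Submodule.Quotient.mk_surjective _ y
  obtain ⟨a, ha, c, hc⟩ := h y ((cyc_iff n y).2 hy)
  refine ⟨Submodule.Quotient.mk ⟨a, (cyc_iff n a).1 ha⟩, ?_⟩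
  change Submodule.Quotient.mk (cyclesMap ℤ f n ⟨a, (cyc_iff n a).1 ha⟩) = _
  rw [Submodule.Quotient.eq]
  change chainsMap ℤ f n a - y ∈ LinearMap.range (d H ℤ n)
  refine ⟨-c, ?_⟩
  have hc' : y = chainsMap ℤ f n a + d H ℤ n c := by
    rw [← chm_eq_map, ← bd_eq_d]; exact hc
  rw [hc', map_neg]
  abel

lemma inj_induced {f : G →* H} {n : ℕ} (h : Inj (tm f) n) :
    Function.Injective (inducedMap ℤ f n) := by
  rw [injective_iff_map_eq_zero]
  intro x hx
  obtain ⟨⟨x, hxc⟩, rfl⟩ := Submodule.Quotient.mk_surjective _ x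
  change Submodule.Quotient.mk (cyclesMap ℤ f n ⟨x, hxc⟩) = 0 at hx
  rw [Submodule.Quotient.mk_eq_zero] at hx
  obtain ⟨b, hb⟩ : chainsMap ℤ f n x ∈ LinearMap.range (d H ℤ n) := hx
  obtain ⟨a, ha⟩ := h x ((cyc_iff n x).2 hxc) ⟨b, by
    change bd (1 : H →* AddMonoid.End ℤ) n b = chm f (AddMonoidHom.id ℤ) n x
    rw [bd_eq_d, chm_eq_map, hb]⟩
  rw [Submodule.Quotient.mk_eq_zero]
  exact ⟨a, by rw [← bd_eq_d]; exact ha.symm⟩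

end Translate

section GLn
variable (F : Type) [Field F] (n : ℕ)

/-- Matrices as linear automorphisms. -/
noncomputable def gle : GL (Fin n) F ≃* ((Fin n → F) ≃ₗ[F] (Fin n → F)) :=
  Matrix.GeneralLinearGroup.toLin.trans (LinearMap.GeneralLinearGroup.generalLinearEquiv F _)

lemma gle_apply (g : GL (Fin n) F) (v : Fin n → F) : gle F n g v = g.1.mulVec v := rfl

lemma dbh_cc (A : Matrix (Fin n) (Fin n) F) (i j : Fin n) :
    diagBlockHom F n A i.castSucc j.castSucc = A i j := by
  simp [diagBlockHom]

lemma dbh_cl (A : Matrix (Fin n) (Fin n) F) (i : Fin n) :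
    diagBlockHom F n A i.castSucc (Fin.last n) = 0 := by
  simp [diagBlockHom]

lemma dbh_lc (A : Matrix (Fin n) (Fin n) F) (i : Fin n) :
    diagBlockHom F n A (Fin.last n) i.castSucc = 0 := by
  simp [diagBlockHom]

lemma dbh_ll (A : Matrix (Fin n) (Fin n) F) :
    diagBlockHom F n A (Fin.last n) (Fin.last n) = 1 := by
  simp [diagBlockHom]

lemma dbh_inj : Function.Injective (diagBlockHom F n) := by
  intro A B h
  ext i j
  rw [← dbh_cc F n A, ← dbh_cc F n B, h]

/-- The last basis vector. -/
noncomputable def el : Fin (n + 1) → F := Pi.single (Fin.last n) 1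

/-- The line. -/
noncomputable def TT : Submodule F (Fin (n + 1) → F) := Submodule.span F {el F n}

/-- The hyperplane. -/
noncomputable def VV : Submodule F (Fin (n + 1) → F) := LinearMap.ker (LinearMap.proj (Fin.last n))

lemma mem_VV {v : Fin (n + 1) → F} : v ∈ VV F n ↔ v (Fin.last n) = 0 := Iff.rfl

lemma mem_Gp_iff (g : GL (Fin (n + 1)) F) : gle F (n + 1) g ∈ Gp (TT F n) (VV F n) ↔
    (∀ i, g.1 i (Fin.last n) = if i = Fin.last n then 1 else 0) ∧
    ∀ j, g.1 (Fin.last n) j = if j = Fin.last n then 1 else 0 := by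
  have hel : ∀ h : (Fin (n + 1) → F) ≃ₗ[F] (Fin (n + 1) → F),
      (∀ u ∈ TT F n, h u = u) ↔ h (el F n) = el F n := by
    intro h
    constructor
    · exact fun hh => hh _ (Submodule.mem_span_singleton_self _)
    · intro hh u hu
      obtain ⟨c, rfl⟩ := Submodule.mem_span_singleton.1 hu
      rw [map_smul, hh]
  rw [mem_Gp, hel]
  refine and_congr ?_ ?_
  · rw [gle_apply, el, Matrix.mulVec_single_one, funext_iff]
    refine forall_congr' fun i => ?_
    rw [Pi.single_apply]
    rfl
  · constructor
    · intro h j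
      have := h (Pi.single j 1)
      rw [mem_VV, gle_apply, Pi.sub_apply, Matrix.mulVec_single_one, sub_eq_zero,
        Pi.single_apply] at this
      rw [show g.1 (Fin.last n) j = _ from this]
      simp only [eq_comm]
    · intro h w
      rw [mem_VV, gle_apply, Pi.sub_apply, sub_eq_zero]
      simp [Matrix.mulVec, dotProduct, h]

lemma stab_mem (A : GL (Fin n) F) : gle F (n + 1) (glStab F n A) ∈ Gp (TT F n) (VV F n) := by
  rw [mem_Gp_iff]
  change (∀ i, diagBlockHom F n A.1 i (Fin.last n) = _) ∧
    ∀ j, diagBlockHom F n A.1 (Fin.last n) j = _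
  constructor
  · intro i
    refine Fin.lastCases ?_ (fun i => ?_) i
    · rw [dbh_ll, if_pos rfl]
    · rw [dbh_cl, if_neg (Fin.castSucc_lt_last i).ne]
  · intro i
    refine Fin.lastCases ?_ (fun i => ?_) i
    · rw [dbh_ll, if_pos rfl]
    · rw [dbh_lc, if_neg (Fin.castSucc_lt_last i).ne]

lemma dbh_sub (g : GL (Fin (n + 1)) F) (hg : gle F (n + 1) g ∈ Gp (TT F n) (VV F n)) :
    diagBlockHom F n (g.1.submatrix Fin.castSucc Fin.castSucc) = g.1 := by
  obtain ⟨h1, h2⟩ := (mem_Gp_iff F n g).1 hg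
  ext i j
  refine Fin.lastCases ?_ (fun i => ?_) i <;> refine Fin.lastCases ?_ (fun j => ?_) j
  · rw [dbh_ll, h1, if_pos rfl]
  · rw [dbh_lc, h2, if_neg (Fin.castSucc_lt_last j).ne]
  · rw [dbh_cl, h1, if_neg (Fin.castSucc_lt_last i).ne]
  · rw [dbh_cc]; rfl

/-- The stabilization map onto its image. -/
noncomputable def stabHom : GL (Fin n) F →* Gp (TT F n) (VV F n) :=
  ((gle F (n + 1)).toMonoidHom.comp (glStab F n)).codRestrict _ (stab_mem F n)

lemma stabHom_bij : Function.Bijective (stabHom F n) := by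
  constructor
  · intro A B h
    have h1 : gle F (n + 1) (glStab F n A) = gle F (n + 1) (glStab F n B) :=
      congrArg (fun z : Gp (TT F n) (VV F n) => z.1) h
    have h2 := (gle F (n + 1)).injective h1
    exact Units.ext (dbh_inj F n (congrArg Units.val h2))
  · rintro ⟨g, hg⟩
    obtain ⟨g, rfl⟩ := (gle F (n + 1)).surjective g
    have hg' : gle F (n + 1) g⁻¹ ∈ Gp (TT F n) (VV F n) := by
      rw [map_inv]; exact inv_mem hg
    refine ⟨⟨g.1.submatrix Fin.castSucc Fin.castSucc, (g⁻¹).1.submatrix Fin.castSucc Fin.castSucc,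
      ?_, ?_⟩, Subtype.ext ?_⟩
    · apply dbh_inj
      rw [map_mul, dbh_sub F n g hg, dbh_sub F n _ hg', map_one]
      exact g.mul_inv
    · apply dbh_inj
      rw [map_mul, dbh_sub F n g hg, dbh_sub F n _ hg', map_one]
      exact g.inv_mul
    · change gle F (n + 1) (glStab F n _) = gle F (n + 1) g
      congr 1
      exact Units.ext (dbh_sub F n g hg)

/-- The whole general linear group. -/
noncomputable def allHom : GL (Fin (n + 1)) F →* Gp (⊥ : Submodule F (Fin (n + 1) → F)) ⊤ :=
  (gle F (n + 1)).toMonoidHom.codRestrict _ (fun g => mem_Gp.2 ⟨fun u hu => by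
    rw [(Submodule.mem_bot F).1 hu, map_zero], fun _ => trivial⟩)

lemma allHom_bij : Function.Bijective (allHom F n) := by
  constructor
  · intro A B h
    exact (gle F (n + 1)).injective
      (congrArg (fun z : Gp (⊥ : Submodule F (Fin (n + 1) → F)) ⊤ => z.1) h)
  · rintro ⟨g, hg⟩
    obtain ⟨g, rfl⟩ := (gle F (n + 1)).surjective g
    exact ⟨g, rfl⟩

lemma el_ne : el F n ≠ 0 := by
  intro h
  have := congrFun h (Fin.last n)
  simp [el] at this

lemma dat_GL : Dat (TT F n) ⊤ (VV F n) (TT F n) := by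
  refine ⟨le_rfl, le_top, ⟨?_, ?_⟩, inf_le_right⟩
  · rw [Submodule.disjoint_def]
    intro v hv ht
    obtain ⟨c, rfl⟩ := Submodule.mem_span_singleton.1 ht
    rw [mem_VV] at hv
    simp only [el, Pi.smul_apply, Pi.single_eq_same, smul_eq_mul, mul_one] at hv
    rw [hv, zero_smul]
  · rw [codisjoint_iff, eq_top_iff]
    intro v _
    refine Submodule.mem_sup.2 ⟨v - v (Fin.last n) • el F n, ?_, v (Fin.last n) • el F n,
      Submodule.smul_mem _ _ (Submodule.mem_span_singleton_self _), sub_add_cancel _ _⟩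
    rw [mem_VV]
    simp [el]

lemma finrank_VV : Module.finrank F (VV F n) = n := by
  have h := (dat_GL F n).finrank_eq
  rw [sup_top_eq, finrank_top, Module.finrank_fin_fun, TT, finrank_span_singleton (el_ne F n)] at h
  omega

theorem good_stab (hF : ∃ x : F, x ≠ 0 ∧ x ≠ 1) : Good (tm (glStab F n)) n := by
  have h1 : GoodSub (Gp (TT F n) (VV F n)) (Gp (TT F n) ⊤) n :=
    QQ_all hF n _ _ _ _ (dat_GL F n) (finrank_VV F n)
  have h2 : GoodSub (Gp (TT F n) ⊤) (Gp (⊥ : Submodule F (Fin (n + 1) → F)) ⊤) n := by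
    have := tcM (U := (⊥ : Submodule F (Fin (n + 1) → F))) (K := ⊤) (w := el F n) trivial
      (fun h => el_ne F n ((Submodule.mem_bot F).1 h)) n (by
        rw [sup_top_eq, finrank_top, Module.finrank_fin_fun, finrank_bot, zero_add])
      (fun U K V T hD => QQ_all hF _ U K V T hD rfl)
    rwa [bot_sup_eq] at this
  obtain ⟨h3, h4⟩ := h1.trans h2
  have g1 := good_tm_equiv (MulEquiv.ofBijective _ (stabHom_bij F n)) n
  have g2 := good_tm_equiv (MulEquiv.ofBijective _ (allHom_bij F n)).symm n
  have g3 : Good (tm ((Subgroup.inclusion h3).comp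
      (MulEquiv.ofBijective _ (stabHom_bij F n)).toMonoidHom)) n :=
    good_barMap_comp (fun _ => rfl) (fun _ => rfl) h4 g1
  refine good_barMap_comp (fun a => ?_) (fun _ => rfl) g2 g3
  change _ = (MulEquiv.ofBijective _ (allHom_bij F n)).symm _
  rw [MulEquiv.eq_symm_apply]
  rfl

end GLn
end GLStab

open GroupHomologyBar in
theorem GL_homology_stability (F : Type) [Field F] (hF : ∃ x : F, x ≠ 0 ∧ x ≠ 1)
    (n : ℕ) (hn : 1 ≤ n) :
    (∀ d : ℕ, d ≤ n - 1 → Function.Bijective (inducedMap ℤ (glStab F n) d)) ∧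
    Function.Surjective (inducedMap ℤ (glStab F n) n) := by
  have h := GLStab.good_stab F n hF
  exact ⟨fun d hd => ⟨GLStab.inj_induced (h.2 d (by omega)),
    GLStab.surj_induced (h.1 d (by omega))⟩, GLStab.surj_induced (h.1 n le_rfl)⟩
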